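/- arXiv:1007.3106 — 12 statements merged into one kernel-verified Lean document; each statement's English description precedes it below -/
import Mathlib

section
/- Let A be a Banach algebra, let B be a Banach A-bimodule and let n ≥ 1. If every continuous derivation from A into the (n+2)-th dual B^(n+2) is inner (i.e. H^1(A,B^(n+2)) = 0), then every continuous derivation from A into the n-th dual B^(n) is inner (i.e. H^1(A,B^(n)) = 0). -/
/-!
The canonical embeddings `B → B**` are bimodule maps, and for a dual module `B*` the embedding
`B* → B***` has a bimodule left inverse, the adjoint of `B → B**` (restriction of a functional on
`B**` to `B`). Hence a derivation `D : A → B*` becomes a derivation into `B***`, and an element `w`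
of `B***` implementing the latter restricts to an element of `B*` implementing `D`. As `n ≥ 1`, the
module `B^(n)` is the dual of `B^(n-1)`, so the theorem is this fact for `B^(n-1)`.
-/

noncomputable section

open ContinuousLinearMap Filter Topology Metric

/-- The topological dual of a real normed space. -/
abbrev Dl (E : Type) [NormedAddCommGroup E] [NormedSpace ℝ E] : Type := E →L[ℝ] ℝ

/-- The bidual of a real normed space. -/
abbrev Bidual (E : Type) [NormedAddCommGroup E] [NormedSpace ℝ E] : Type := Dl (Dl E)

section Defs

variable {E F G W : Type}
variable [NormedAddCommGroup E] [NormedSpace ℝ E] [NormedAddCommGroup F] [NormedSpace ℝ F]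
  [NormedAddCommGroup G] [NormedSpace ℝ G] [NormedAddCommGroup W] [NormedSpace ℝ W]

/-- The first adjoint `m*` of a bounded bilinear map `m`, defined by
`⟨m*(z',x), y⟩ = ⟨z', m(x,y)⟩`. -/
def adj (m : E →L[ℝ] F →L[ℝ] G) : Dl G →L[ℝ] E →L[ℝ] Dl F :=
  ((ContinuousLinearMap.compL ℝ E (F →L[ℝ] G) (Dl F)).flip m).comp
    (ContinuousLinearMap.compL ℝ F G ℝ)

/-- The (first) Arens triple adjoint `m*** = (m*)**` of a bounded bilinear map `m`;
for `m` the multiplication of a Banach algebra this is the first Arens product. -/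
def arens3 (m : E →L[ℝ] F →L[ℝ] G) : Bidual E →L[ℝ] Bidual F →L[ℝ] Bidual G :=
  adj (adj (adj m))

/-- The canonical embedding of a normed space into its bidual. -/
def inclBidual (E : Type) [NormedAddCommGroup E] [NormedSpace ℝ E] : E →L[ℝ] Bidual E :=
  (ContinuousLinearMap.id ℝ (Dl E)).flip

/-- The dual (adjoint) map of a continuous linear map. -/
def dmap (T : E →L[ℝ] F) : Dl F →L[ℝ] Dl E := (ContinuousLinearMap.compL ℝ E F ℝ).flip T

/-- The second adjoint `T″ : E** → F**` of a continuous linear map `T : E → F`. -/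
def bidualMap (T : E →L[ℝ] F) : Bidual E →L[ℝ] Bidual F := dmap (dmap T)

/-- Given a (left or right) module action `act : C →L W →L W`, the induced action
on the dual `W*`, `(dualActL act) c f = f ∘ (act c)`.  If `act` is the right action
`w ↦ w·c` this is the left action `⟨c·f, w⟩ = ⟨f, w·c⟩` on `W*`; if `act` is the left
action it is the right action on `W*`. -/
def dualActL (act : E →L[ℝ] W →L[ℝ] W) : E →L[ℝ] Dl W →L[ℝ] Dl W :=
  ((ContinuousLinearMap.compL ℝ W W ℝ).flip).comp act

@[simp] theorem dualActL_apply (act : E →L[ℝ] W →L[ℝ] W) (c : E) (f : Dl W) (w : W) :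
    dualActL act c f w = f (act c w) := rfl

/-- `D : C → W` is a derivation with respect to the multiplication `mul` on `C` and the
left action `l` and right action `r` (with `r c w = w·c`) of `C` on `W`. -/
def IsDerivation (mul : E →L[ℝ] E →L[ℝ] E) (l r : E →L[ℝ] W →L[ℝ] W) (D : E →L[ℝ] W) : Prop :=
  ∀ a b : E, D (mul a b) = l a (D b) + r b (D a)

/-- `D` is an inner derivation: `D c = c·w - w·c` for some `w`. -/
def IsInner (l r : E →L[ℝ] W →L[ℝ] W) (D : E →L[ℝ] W) : Prop :=
  ∃ w : W, ∀ a : E, D a = l a w - r a w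

/-- `H¹(C, W) = 0`: every continuous derivation is inner. -/
def H1Zero (mul : E →L[ℝ] E →L[ℝ] E) (l r : E →L[ℝ] W →L[ℝ] W) : Prop :=
  ∀ D : E →L[ℝ] W, IsDerivation mul l r D → IsInner l r D

/-- The axioms making `(l, r)` a bimodule structure over `(C, mul)`
(with the convention `l c w = c·w`, `r c w = w·c`). -/
def IsBimodule (mul : E →L[ℝ] E →L[ℝ] E) (l r : E →L[ℝ] W →L[ℝ] W) : Prop :=
  (∀ a b w, l (mul a b) w = l a (l b w)) ∧
  (∀ a b w, r (mul a b) w = r b (r a w)) ∧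
  (∀ a b w, r b (l a w) = l a (r b w))

/-- A map between dual spaces is weak*-to-weak* continuous. -/
def WStarCont (f : Dl E → Dl F) : Prop :=
  Continuous (show WeakDual ℝ E → WeakDual ℝ F from f)

/-- A map from a dual space to a normed space is weak*-to-weak continuous. -/
def WStarWeakCont (f : Dl E → F) : Prop :=
  Continuous (show WeakDual ℝ E → WeakSpace ℝ F from f)

/-- A continuous linear operator is weakly compact: the closure of the image of the
closed unit ball is compact in the weak topology. -/
def WeaklyCompactOp (T : E →L[ℝ] F) : Prop :=
  IsCompact (@closure (WeakSpace ℝ F) inferInstance (T '' Metric.closedBall 0 1))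

end Defs

/-- A Banach bimodule over `(A, mul)`: a complete normed space together with bounded
bilinear left/right actions (`r a w = w·a`) satisfying the bimodule axioms. -/
structure BBimod (A : Type) [NormedAddCommGroup A] [NormedSpace ℝ A]
    (mul : A →L[ℝ] A →L[ℝ] A) : Type 1 where
  W : Type
  [Wg : NormedAddCommGroup W]
  [Wm : NormedSpace ℝ W]
  [Wc : CompleteSpace W]
  l : A →L[ℝ] W →L[ℝ] W
  r : A →L[ℝ] W →L[ℝ] W
  isBBimod : IsBimodule mul l r

attribute [instance] BBimod.Wg BBimod.Wm BBimod.Wc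

variable {A : Type} [NormedAddCommGroup A] [NormedSpace ℝ A] {mul : A →L[ℝ] A →L[ℝ] A}

/-- The dual of a Banach `A`-bimodule, with actions `⟨a·f, w⟩ = ⟨f, w·a⟩` and
`⟨f·a, w⟩ = ⟨f, a·w⟩`. -/
def BBimod.dual (M : BBimod A mul) : BBimod A mul where
  W := Dl M.W
  l := dualActL M.r
  r := dualActL M.l
  isBBimod := by
    obtain ⟨h1, h2, h3⟩ := M.isBBimod
    refine ⟨fun a b f => ?_, fun a b f => ?_, fun a b f => ?_⟩ <;> ext w <;>
      simp [dualActL, h1, h2, h3]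

/-- The iterated dual `B^(n)` of a Banach `A`-bimodule `B`. -/
def BBimod.iterDual (M : BBimod A mul) : ℕ → BBimod A mul
  | 0 => M
  | n + 1 => (M.iterDual n).dual

/-- A pair consisting of a normed algebra-like space `(C, mul)` and a module `(W, l, r)`
over it, each equipped with a distinguished topology (the weak topology at the base
level, the weak* topology after taking biduals). -/
structure ModPair : Type 1 where
  C : Type
  [Cg : NormedAddCommGroup C]
  [Cm : NormedSpace ℝ C]
  W : Type
  [Wg : NormedAddCommGroup W]
  [Wm : NormedSpace ℝ W]
  mul : C →L[ℝ] C →L[ℝ] C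
  l : C →L[ℝ] W →L[ℝ] W
  r : C →L[ℝ] W →L[ℝ] W
  tC : TopologicalSpace C
  tW : TopologicalSpace W

attribute [instance] ModPair.Cg ModPair.Cm ModPair.Wg ModPair.Wm

/-- The bidual step: `C**` gets the first Arens product, `W**` the triple-adjoint
module actions `π_ℓ***`, `π_r***`, and both carry their weak* topologies. -/
def ModPair.bidual (P : ModPair) : ModPair where
  C := Bidual P.C
  tC := (inferInstance : TopologicalSpace (WeakDual ℝ (Dl P.C)))
  W := Bidual P.W
  tW := (inferInstance : TopologicalSpace (WeakDual ℝ (Dl P.W)))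
  mul := arens3 P.mul
  l := arens3 P.l
  r := (arens3 P.r.flip).flip

/-- The `n`-fold bidual pair: `A^(2n)` acting on `B^(2n)`. -/
def ModPair.iter (P : ModPair) : ℕ → ModPair
  | 0 => P
  | n + 1 => (P.iter n).bidual

/-- The canonical embedding `C → C^(2n)`. -/
def ModPair.inclC (P : ModPair) : (n : ℕ) → P.C →L[ℝ] (P.iter n).C
  | 0 => ContinuousLinearMap.id ℝ P.C
  | n + 1 => (inclBidual (P.iter n).C).comp (P.inclC n)

/-- The base pair of a Banach algebra `A` and a Banach `A`-bimodule, with the weak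
topologies as distinguished topologies. -/
def basePair (A : Type) [NonUnitalNormedRing A] [NormedSpace ℝ A]
    [IsScalarTower ℝ A A] [SMulCommClass ℝ A A]
    (M : BBimod A (ContinuousLinearMap.mul ℝ A)) : ModPair where
  C := A
  tC := (inferInstance : TopologicalSpace (WeakSpace ℝ A))
  W := M.W
  tW := (inferInstance : TopologicalSpace (WeakSpace ℝ M.W))
  mul := ContinuousLinearMap.mul ℝ A
  l := M.l
  r := M.r

/-- The set of products of `k` elements of `A` (by convention all of `A` when `k = 0`). -/
def iteratedProds (A : Type) [Mul A] : ℕ → Set A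
  | 0 => Set.univ
  | 1 => Set.univ
  | k + 2 => {x | ∃ y ∈ iteratedProds A (k + 1), ∃ a : A, x = y * a}

/-- `A` has a bounded left approximate identity: a bounded net `(e_i)` with
`e_i * a → a` for every `a`. -/
def HasBLAI (A : Type) [NonUnitalNormedRing A] : Prop :=
  ∃ (ι : Type) (p : Preorder ι), Nonempty ι ∧ IsDirected ι p.toLE.le ∧
    ∃ (e : ι → A) (C : ℝ), (∀ i, ‖e i‖ ≤ C) ∧
      ∀ a : A, Filter.Tendsto (fun i => e i * a) (@Filter.atTop ι p) (𝓝 a)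


/-- The passage from the third dual to the first: an implementing element in `B***` is restricted
along the canonical embedding `B → B**`. -/
theorem BBimod.h1Zero_dual_of_h1Zero_tripleDual (M : BBimod A mul)
    (h : H1Zero mul M.dual.dual.dual.l M.dual.dual.dual.r) :
    H1Zero mul M.dual.l M.dual.r := by
  intro D hD
  have hD' : IsDerivation mul M.dual.dual.dual.l M.dual.dual.dual.r
      ((inclBidual M.dual.W).comp D) := by
    intro a b
    refine ContinuousLinearMap.ext fun (φ : Dl M.dual.W) => ?_
    exact (congrArg (fun f : M.dual.W => φ f) (hD a b)).trans
      (ContinuousLinearMap.map_add φ _ _)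
  obtain ⟨w, hw⟩ := h _ hD'
  refine ⟨dmap (inclBidual M.W) w, fun a => ContinuousLinearMap.ext fun x => ?_⟩
  -- evaluate both sides of `hw a` at the image of `x` in `B**`
  exact congrArg (fun ψ : Dl (Bidual M.W) => ψ (inclBidual M.W x)) (hw a)

/-- **Theorem 2-1.** Let `B` be a Banach `A`-bimodule and `n ≥ 1`.
If `H¹(A, B^(n+2)) = 0` then `H¹(A, B^(n)) = 0`. -/
theorem stmt0 {A : Type} [NonUnitalNormedRing A] [NormedSpace ℝ A]
    [IsScalarTower ℝ A A] [SMulCommClass ℝ A A] [CompleteSpace A]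
    (M : BBimod A (ContinuousLinearMap.mul ℝ A)) (n : ℕ) (hn : 1 ≤ n)
    (h : H1Zero (ContinuousLinearMap.mul ℝ A)
      (M.iterDual (n + 2)).l (M.iterDual (n + 2)).r) :
    H1Zero (ContinuousLinearMap.mul ℝ A) (M.iterDual n).l (M.iterDual n).r := by
  obtain ⟨k, rfl⟩ := Nat.exists_eq_add_of_le' hn
  exact (M.iterDual k).h1Zero_dual_of_h1Zero_tripleDual h

end
end

section
/- Let A be a Banach algebra, n ≥ 0, and suppose the set A^[2n] = {a₁a₂⋯a_{2n} : a₁,…,a_{2n} ∈ A} is dense in A. Let B be a Banach A-bimodule such that A·B** ⊆ B and B**·A ⊆ B, i.e. π_ℓ***(a,b″) ∈ B and π_r***(b″,a) ∈ B for all a ∈ A and b″ ∈ B** (B canonically embedded in B**). If every continuous derivation from A into B* is inner (H^1(A,B*) = 0), then every continuous derivation from A into B^(2n+1) is inner (H^1(A,B^(2n+1)) = 0). -/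
/-!
Write `B` for the bimodule and `J : B → B^(2n)` for the canonical embedding, an isometric bimodule
map; let `n ≥ 1`, as `n = 0` is trivial. The key point is that a product `x` of `n` elements of `A` satisfies
`x·B^(2n) ⊆ J(B)` and `B^(2n)·x ⊆ J(B)`. For `n = 1` this is the hypothesis on `B**`. For the
inductive step, if multiplication by `x` on `N = B^(2n)` factors as `J ∘ S`, then on `N**` it is
`J** ∘ S**`, and a further multiplication by `a` moves through `J**` to act on `B**`, where it
takes values in `B` (`factor_bidual`).

Given a derivation `D : A → B^(2n+1) = (B^(2n))*`, restriction along `J` gives a derivation into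
`B*`, which is implemented by some `f`. With `F` an extension of `f` along `J`, the derivation
`D' = D - ad F` takes values in the annihilator of `J(B)`. Thus for products `x, y` of `n` factors
`⟨D'(xy), w⟩ = ⟨D' y, w·x⟩ + ⟨D' x, y·w⟩ = 0`, so `D'` vanishes on the dense set `A^[2n]`.
-/

noncomputable section

open ContinuousLinearMap Filter Topology Metric

variable {A : Type} [NormedAddCommGroup A] [NormedSpace ℝ A] {mul : A →L[ℝ] A →L[ℝ] A}

theorem iteratedProds_split {A : Type} [Semigroup A] (m k : ℕ) :
    ∀ z ∈ iteratedProds A (m + 1 + (k + 1)),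
      ∃ x ∈ iteratedProds A (m + 1), ∃ y ∈ iteratedProds A (k + 1), z = x * y := by
  induction k with
  | zero =>
    rintro z ⟨y, hy, a, rfl⟩
    exact ⟨y, hy, a, Set.mem_univ _, rfl⟩
  | succ k ih =>
    rintro z ⟨y, hy, a, rfl⟩
    obtain ⟨x, hx, y', hy', rfl⟩ := ih y hy
    exact ⟨x, hx, y' * a, ⟨y', hy', a, rfl⟩, mul_assoc _ _ _⟩

/-- A bounded operator with values in the range of an isometry factors boundedly through it. -/
theorem exists_factor {X Y B : Type} [NormedAddCommGroup X] [NormedSpace ℝ X]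
    [NormedAddCommGroup Y] [NormedSpace ℝ Y] [NormedAddCommGroup B] [NormedSpace ℝ B]
    (J : B →L[ℝ] Y) (hJ : ∀ b, ‖J b‖ = ‖b‖) (T : X →L[ℝ] Y) (hT : ∀ x, ∃ b, T x = J b) :
    ∃ S : X →L[ℝ] B, ∀ x, T x = J (S x) := by
  let Ji : B →ₗᵢ[ℝ] Y := ⟨J.toLinearMap, hJ⟩
  choose s hs using hT
  have hinj : Function.Injective J := Ji.injective
  refine ⟨LinearMap.mkContinuous ⟨⟨s, fun x y => ?_⟩, fun c x => ?_⟩ ‖T‖ fun x => ?_, hs⟩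
  · apply hinj
    rw [← hs, map_add, map_add, hs, hs]
  · apply hinj
    rw [← hs, map_smul, RingHom.id_apply, map_smul, hs]
  · change ‖s x‖ ≤ _
    rw [← hJ, ← hs]
    exact T.le_opNorm x

/-- If `Tx` takes values in the range of the isometry `J`, if `Ta ∘ J = J ∘ ta`, and if the second
adjoint of `ta` maps `B**` into `B`, then the second adjoint of `Ta ∘ Tx` maps `N**` into the copy
of `B` in `N**`. -/
theorem factor_bidual {N B : Type} [NormedAddCommGroup N] [NormedSpace ℝ N]
    [NormedAddCommGroup B] [NormedSpace ℝ B]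
    (J : B →L[ℝ] N) (hJ : ∀ b, ‖J b‖ = ‖b‖) (Ta Tx : N →L[ℝ] N) (ta : B →L[ℝ] B)
    (hTx : ∀ w, ∃ b, Tx w = J b) (hTa : ∀ b, Ta (J b) = J (ta b))
    (hta : ∀ v : Bidual B, ∃ b : B, ∀ g : Dl B, v (g.comp ta) = g b) (w : Bidual N) :
    ∃ b : B, ∀ f : Dl N, w (f.comp (Ta.comp Tx)) = f (J b) := by
  obtain ⟨S, hS⟩ := exists_factor J hJ Tx hTx
  obtain ⟨b, hb⟩ := hta (bidualMap S w)
  refine ⟨b, fun f => ?_⟩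
  have h := hb (f.comp J)
  have e : f.comp (Ta.comp Tx) = ((f.comp J).comp ta).comp S := by
    ext x
    simp [hS, hTa]
  rw [e]
  exact h

/-- `N` contains an isometric copy of the bimodule `M`, along which functionals extend, and which
absorbs the action on `N`, from either side, of every product of `k` elements of `A`. -/
def AbsorbsInto {A : Type} [NonUnitalNormedRing A] [NormedSpace ℝ A]
    [IsScalarTower ℝ A A] [SMulCommClass ℝ A A]
    (M N : BBimod A (ContinuousLinearMap.mul ℝ A)) (k : ℕ) : Prop :=
  ∃ J : M.W →L[ℝ] N.W, (∀ b, ‖J b‖ = ‖b‖) ∧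
    (∀ a b, N.l a (J b) = J (M.l a b)) ∧ (∀ a b, N.r a (J b) = J (M.r a b)) ∧
    (∀ f : Dl M.W, ∃ F : Dl N.W, ∀ b, F (J b) = f b) ∧
    (∀ x ∈ iteratedProds A k, ∀ w, ∃ b, N.l x w = J b) ∧
    (∀ x ∈ iteratedProds A k, ∀ w, ∃ b, N.r x w = J b)

theorem norm_inclBidual {E : Type} [NormedAddCommGroup E] [NormedSpace ℝ E] (x : E) :
    ‖inclBidual E x‖ = ‖x‖ :=
  (NormedSpace.inclusionInDoubleDualLi ℝ (E := E)).norm_map x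

section

variable {A : Type} [NonUnitalNormedRing A] [NormedSpace ℝ A]
  [IsScalarTower ℝ A A] [SMulCommClass ℝ A A]
  {M N : BBimod A (ContinuousLinearMap.mul ℝ A)}

theorem absorbs_base
    (hl : ∀ (a : A) (v : Bidual M.W), ∃ b : M.W, ∀ g : Dl M.W, v (g.comp (M.l a)) = g b)
    (hr : ∀ (a : A) (v : Bidual M.W), ∃ b : M.W, ∀ g : Dl M.W, v (g.comp (M.r a)) = g b) :
    AbsorbsInto M M.dual.dual 1 := by
  refine ⟨inclBidual M.W, norm_inclBidual, fun a b => rfl, fun a b => rfl,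
    fun f => ⟨inclBidual (Dl M.W) f, fun b => rfl⟩, fun x _ w => ?_, fun x _ w => ?_⟩
  · obtain ⟨b, hb⟩ := hl x w
    exact ⟨b, ContinuousLinearMap.ext hb⟩
  · obtain ⟨b, hb⟩ := hr x w
    exact ⟨b, ContinuousLinearMap.ext hb⟩

theorem absorbs_step
    (hl : ∀ (a : A) (v : Bidual M.W), ∃ b : M.W, ∀ g : Dl M.W, v (g.comp (M.l a)) = g b)
    (hr : ∀ (a : A) (v : Bidual M.W), ∃ b : M.W, ∀ g : Dl M.W, v (g.comp (M.r a)) = g b)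
    {k : ℕ} (h : AbsorbsInto M N (k + 1)) : AbsorbsInto M N.dual.dual (k + 2) := by
  obtain ⟨J, hJ, hJl, hJr, hext, hxl, hxr⟩ := h
  refine ⟨(inclBidual N.W).comp J, fun b => (norm_inclBidual (J b)).trans (hJ b),
    fun a b => ?_, fun a b => ?_, fun f => ?_, fun z hz w => ?_, fun z hz w => ?_⟩
  · exact congrArg (inclBidual N.W) (hJl a b)
  · exact congrArg (inclBidual N.W) (hJr a b)
  · obtain ⟨F, hF⟩ := hext f
    exact ⟨inclBidual (Dl N.W) F, hF⟩
  -- On the left the last factor to act must be split off in front: `z = a * x`.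
  · rw [show k + 2 = 0 + 1 + (k + 1) by omega] at hz
    obtain ⟨a, -, x, hx, rfl⟩ := iteratedProds_split 0 k z hz
    obtain ⟨b, hb⟩ := factor_bidual J hJ (N.l a) (N.l x) (M.l a) (hxl x hx) (hJl a) (hl a) w
    refine ⟨b, ContinuousLinearMap.ext fun (f : Dl N.W) => ?_⟩
    have e : f.comp (N.l (a * x)) = f.comp ((N.l a).comp (N.l x)) :=
      ContinuousLinearMap.ext fun u => congrArg (fun t => f t) (N.isBBimod.1 a x u)
    exact (congrArg (fun g : Dl N.W => (show Bidual N.W from w) g) e).trans (hb f)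
  · obtain ⟨x, hx, a, rfl⟩ := hz
    obtain ⟨b, hb⟩ := factor_bidual J hJ (N.r a) (N.r x) (M.r a) (hxr x hx) (hJr a) (hr a) w
    refine ⟨b, ContinuousLinearMap.ext fun (f : Dl N.W) => ?_⟩
    have e : f.comp (N.r (x * a)) = f.comp ((N.r a).comp (N.r x)) :=
      ContinuousLinearMap.ext fun u => congrArg (fun t => f t) (N.isBBimod.2.1 x a u)
    exact (congrArg (fun g : Dl N.W => (show Bidual N.W from w) g) e).trans (hb f)

theorem absorbs_iterDual
    (hl : ∀ (a : A) (v : Bidual M.W), ∃ b : M.W, ∀ g : Dl M.W, v (g.comp (M.l a)) = g b)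
    (hr : ∀ (a : A) (v : Bidual M.W), ∃ b : M.W, ∀ g : Dl M.W, v (g.comp (M.r a)) = g b)
    (m : ℕ) : AbsorbsInto M (M.iterDual (2 * (m + 1))) (m + 1) := by
  induction m with
  | zero => exact absorbs_base hl hr
  | succ m ih => exact absorbs_step hl hr ih

/-- `H¹(A, M*) = 0` passes to `H¹(A, N*) = 0` when `N` absorbs products of `m + 1` elements into
`M` and the products of twice as many elements are dense. -/
theorem h1Zero_of_absorbs {m : ℕ} (h : AbsorbsInto M N (m + 1))
    (hdense : Dense (iteratedProds A (m + 1 + (m + 1))))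
    (h1 : H1Zero (ContinuousLinearMap.mul ℝ A) M.dual.l M.dual.r) :
    H1Zero (ContinuousLinearMap.mul ℝ A) N.dual.l N.dual.r := by
  obtain ⟨J, -, hJl, hJr, hext, hxl, hxr⟩ := h
  change ∀ D : A →L[ℝ] Dl N.W, IsDerivation (ContinuousLinearMap.mul ℝ A)
    (dualActL N.r) (dualActL N.l) D → IsInner (dualActL N.r) (dualActL N.l) D
  replace h1 : H1Zero (ContinuousLinearMap.mul ℝ A) (dualActL M.r) (dualActL M.l) := h1
  intro D hD
  have hDw : ∀ a b (w : N.W), D (a * b) w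
      = D b (N.r a w) + D a (N.l b w) :=
    fun a b w => congrArg (fun F : Dl N.W => F w) (hD a b)
  -- The restriction of `D` along `J` is a derivation into the dual of `M`, hence inner.
  obtain ⟨f, hf⟩ := h1 ((dmap J).comp D) (by
    intro a b
    refine ContinuousLinearMap.ext fun w => ?_
    refine (hDw a b (J w)).trans ?_
    rw [hJl, hJr]
    rfl)
  obtain ⟨F, hF⟩ := hext f
  have hfw : ∀ a w, D a (J w) = f (M.r a w) - f (M.l a w) :=
    fun a w => congrArg (fun G : Dl M.W => G w) (hf a)
  refine ⟨F, fun a => ?_⟩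
  let D' : A →L[ℝ] Dl N.W := D - (dualActL N.r).flip F + (dualActL N.l).flip F
  have hD' : ∀ a w, D' a w = D a w - F (N.r a w) + F (N.l a w) := fun a w => rfl
  have hD'J : ∀ a b, D' a (J b) = 0 := fun a b => by
    rw [hD', hfw, hJl, hJr, hF, hF]
    ring
  have hder : ∀ a b w, D' (a * b) w = D' b (N.r a w) + D' a (N.l b w) := fun a b w => by
    have e1 : N.l (a * b) w = N.l a (N.l b w) := N.isBBimod.1 a b w
    have e2 : N.r (a * b) w = N.r b (N.r a w) := N.isBBimod.2.1 a b w
    have e3 := N.isBBimod.2.2 b a w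
    rw [hD', hD', hD', hDw, e1, e2, e3]
    ring
  have hzero : (D' : A → Dl N.W) = fun _ => 0 := by
    refine Continuous.ext_on hdense D'.continuous continuous_const fun z hz => ?_
    obtain ⟨x, hx, y, hy, rfl⟩ := iteratedProds_split m m z hz
    refine ContinuousLinearMap.ext fun w => ?_
    obtain ⟨b, hb⟩ := hxr x hx w
    obtain ⟨c, hc⟩ := hxl y hy w
    rw [hder, hb, hc, hD'J, hD'J, add_zero]
    rfl
  refine ContinuousLinearMap.ext fun w => ?_
  have h0 : D' a w = 0 := congrArg (fun G : Dl N.W => G w) (congrFun hzero a)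
  rw [hD'] at h0
  change D a w = F (N.r a w) - F (N.l a w)
  linarith

end

/-- **Theorem 2-5.** If `A^[2n]` is dense in `A`, `A·B** ⊆ B`, `B**·A ⊆ B` and
`H¹(A, B*) = 0`, then `H¹(A, B^(2n+1)) = 0`. -/
theorem stmt3 {A : Type} [NonUnitalNormedRing A] [NormedSpace ℝ A]
    [IsScalarTower ℝ A A] [SMulCommClass ℝ A A] [CompleteSpace A]
    (M : BBimod A (ContinuousLinearMap.mul ℝ A)) (n : ℕ)
    (hdense : Dense (iteratedProds A (2 * n)))
    (hl : ∀ (a : A) (b'' : Bidual M.W), ∃ b : M.W,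
      arens3 M.l (inclBidual A a) b'' = inclBidual M.W b)
    (hr : ∀ (a : A) (b'' : Bidual M.W), ∃ b : M.W,
      (arens3 M.r.flip) b'' (inclBidual A a) = inclBidual M.W b)
    (h1 : H1Zero (ContinuousLinearMap.mul ℝ A) M.dual.l M.dual.r) :
    H1Zero (ContinuousLinearMap.mul ℝ A)
      (M.iterDual (2 * n + 1)).l (M.iterDual (2 * n + 1)).r := by
  have hl' : ∀ (a : A) (v : Bidual M.W), ∃ b : M.W, ∀ g : Dl M.W,
      v (g.comp (M.l a)) = g b := fun a v => by
    obtain ⟨b, hb⟩ := hl a v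
    exact ⟨b, fun g => congrArg (fun G : Bidual M.W => G g) hb⟩
  have hr' : ∀ (a : A) (v : Bidual M.W), ∃ b : M.W, ∀ g : Dl M.W,
      v (g.comp (M.r a)) = g b := fun a v => by
    obtain ⟨b, hb⟩ := hr a v
    exact ⟨b, fun g => congrArg (fun G : Bidual M.W => G g) hb⟩
  cases n with
  | zero => exact h1
  | succ m =>
    rw [two_mul] at hdense
    exact h1Zero_of_absorbs (absorbs_iterDual hl' hr' m) hdense h1

end
end

section
/- Let A be a Banach algebra possessing a bounded left approximate identity, and let B be a Banach A-bimodule such that A·B** ⊆ B and B**·A ⊆ B (i.e. π_ℓ***(a,b″) ∈ B and π_r***(b″,a) ∈ B for all a ∈ A, b″ ∈ B**, with B canonically embedded in B**). If every continuous derivation from A into B* is inner (H^1(A,B*) = 0), then for every n ≥ 0 every continuous derivation from A into B^(2n+1) is inner (H^1(A,B^(2n+1)) = 0). -/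
/-!
Write `ι : B → B**` for the canonical embedding, and call `B` *absorbing* when `A·B** ⊆ ι B` and
`B**·A ⊆ ι B`.

If `B` is absorbing then `H¹(A, B*) = 0` implies `H¹(A, B***) = 0` (`h1Zero_step`). Indeed, let
`D : A → B***` be a derivation. Restricting functionals on `B**` to `B` gives a derivation
`A → B*`, implemented by some `f ∈ B*`; subtracting from `D` the inner derivation of the image
of `f` in `B***` leaves a derivation `E` with values in the annihilator of `ι B`. Both module
actions vanish on this annihilator because `B` is absorbing, so `E` kills every product `ab`.
Products are dense in `A` thanks to the left approximate identity, hence `E = 0`.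

The absorbing property passes from `B` to `B*` (`Absorbing.dual`), hence to all `B^(2n)`, and the
theorem follows by induction. This is the algebraic part of Gantmacher's theorem: if an
operator `s` on `X` satisfies `s**(X**) ⊆ X`, then `s***(ξ) = s*(ξ|_X)` for each `ξ ∈ X***`,
so that `s***(X***) ⊆ X*`.
-/

noncomputable section

open ContinuousLinearMap Filter Topology Metric

variable {A : Type} [NormedAddCommGroup A] [NormedSpace ℝ A] {mul : A →L[ℝ] A →L[ℝ] A}

/-- The second adjoint of every left or right multiplication operator maps the bidual of the
module into the module itself, i.e. `A·B** ⊆ B` and `B**·A ⊆ B`. -/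
def Absorbing (M : BBimod A mul) : Prop :=
  (∀ (a : A) (φ : Bidual M.W), ∃ b : M.W, M.dual.dual.l a φ = inclBidual M.W b) ∧
  (∀ (a : A) (φ : Bidual M.W), ∃ b : M.W, M.dual.dual.r a φ = inclBidual M.W b)

/-- If `s**(X**) ⊆ X`, then `s***(X***) ⊆ X*`: the element `s***(ξ)` is `s*` applied to the
restriction of `ξ` to `X`. -/
theorem triple_adjoint_mem {X : Type} [NormedAddCommGroup X] [NormedSpace ℝ X] (s : X →L[ℝ] X)
    (hs : ∀ φ : Bidual X, ∃ x : X, bidualMap s φ = inclBidual X x) (ξ : Bidual (Dl X)) :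
    bidualMap (dmap s) ξ = inclBidual (Dl X) (dmap s (dmap (inclBidual X) ξ)) := by
  ext φ
  obtain ⟨x, hx⟩ := hs φ
  have h₁ : bidualMap (dmap s) ξ φ = ξ (inclBidual X x) := congrArg ξ hx
  have h₂ : φ (dmap s (dmap (inclBidual X) ξ)) = ξ (inclBidual X x) :=
    DFunLike.congr_fun hx (dmap (inclBidual X) ξ)
  exact h₁.trans h₂.symm

theorem Absorbing.dual {M : BBimod A mul} (h : Absorbing M) : Absorbing M.dual :=
  ⟨fun a ξ => ⟨_, triple_adjoint_mem (M.r a) (h.2 a) ξ⟩,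
    fun a ξ => ⟨_, triple_adjoint_mem (M.l a) (h.1 a) ξ⟩⟩

theorem Absorbing.iterDual {M : BBimod A mul} (h : Absorbing M) :
    ∀ n : ℕ, Absorbing (M.iterDual n)
  | 0 => h
  | n + 1 => (h.iterDual n).dual

/-- A continuous linear map vanishing on all products is zero on an algebra with a left
approximate identity. -/
theorem eq_zero_of_mul_eq_zero {A : Type} [NonUnitalNormedRing A] [NormedSpace ℝ A]
    (hBLAI : HasBLAI A) {V : Type} [NormedAddCommGroup V] [NormedSpace ℝ V]
    (E : A →L[ℝ] V) (hE : ∀ a b : A, E (a * b) = 0) (a : A) : E a = 0 := by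
  obtain ⟨ι, p, hne, hdir, e, C, -, he⟩ := hBLAI
  let _ := p
  have := hne
  have : IsDirectedOrder ι := hdir
  have h₁ := (E.continuous.tendsto a).comp (he a)
  have h₂ : (E ∘ fun i => e i * a) = fun _ => 0 := funext fun i => hE _ _
  rw [h₂] at h₁
  exact tendsto_nhds_unique h₁ tendsto_const_nhds

theorem h1Zero_step {A : Type} [NonUnitalNormedRing A] [NormedSpace ℝ A]
    [IsScalarTower ℝ A A] [SMulCommClass ℝ A A]
    (M : BBimod A (ContinuousLinearMap.mul ℝ A)) (hBLAI : HasBLAI A) (hM : Absorbing M)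
    (h1 : H1Zero (ContinuousLinearMap.mul ℝ A) M.dual.l M.dual.r) :
    H1Zero (ContinuousLinearMap.mul ℝ A) M.dual.dual.dual.l M.dual.dual.dual.r := by
  intro D hD
  -- the derivation into `B*` obtained by restricting functionals on `B**` to `B`
  obtain ⟨f, hf⟩ := h1 ((dmap (inclBidual M.W)).comp D) (by
    intro a b
    have h := congrArg (dmap (inclBidual M.W)) (hD a b)
    exact h.trans (map_add _ _ _))
  let F : M.dual.dual.dual.W := inclBidual (Dl M.W) f
  refine ⟨F, fun a => ?_⟩
  let E : A →L[ℝ] M.dual.dual.dual.W :=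
    D - (M.dual.dual.dual.l.flip F - M.dual.dual.dual.r.flip F)
  have hEa : ∀ a, E a = D a - (M.dual.dual.dual.l a F - M.dual.dual.dual.r a F) := fun _ => rfl
  have hEder : ∀ a b, E (a * b) = M.dual.dual.dual.l a (E b) + M.dual.dual.dual.r b (E a) := by
    intro a b
    obtain ⟨k₁, k₂, k₃⟩ := M.dual.dual.dual.isBBimod
    have hab := hD a b
    have kl := k₁ a b F
    have kr := k₂ a b F
    rw [ContinuousLinearMap.mul_apply'] at hab kl kr
    rw [hEa, hEa, hEa, hab, kl, kr]
    simp only [map_sub, k₃]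
    abel
  -- `E`, with its values read as functionals on `B**`
  let ev : A → Dl (Bidual M.W) := E
  -- `E` takes values in the annihilator of `B` in `B***`
  have hEann : ∀ (a : A) (b : M.W), ev a (inclBidual M.W b) = 0 := by
    intro a b
    exact sub_eq_zero.mpr (congrArg (fun g : Dl M.W => g b) (hf a))
  have hEmul : ∀ a b : A, E (a * b) = 0 := by
    intro a b
    rw [hEder]
    refine ContinuousLinearMap.ext fun φ : Bidual M.W => ?_
    obtain ⟨x, hx⟩ := hM.2 a φ
    obtain ⟨y, hy⟩ := hM.1 b φ
    have e₁ : (ev b) (M.dual.dual.r a φ) = 0 :=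
      (congrArg (ev b) hx).trans (hEann b x)
    have e₂ : (ev a) (M.dual.dual.l b φ) = 0 :=
      (congrArg (ev a) hy).trans (hEann a y)
    exact (congrArg₂ (· + ·) e₁ e₂).trans (add_zero 0)
  exact sub_eq_zero.mp (eq_zero_of_mul_eq_zero hBLAI E hEmul a)

/-- **Corollary 2-6 (i).** If `A` has a bounded left approximate identity,
`A·B** ⊆ B`, `B**·A ⊆ B` and `H¹(A, B*) = 0`, then `H¹(A, B^(2n+1)) = 0` for all `n ≥ 0`. -/
theorem stmt4 {A : Type} [NonUnitalNormedRing A] [NormedSpace ℝ A]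
    [IsScalarTower ℝ A A] [SMulCommClass ℝ A A] [CompleteSpace A]
    (M : BBimod A (ContinuousLinearMap.mul ℝ A))
    (hBLAI : HasBLAI A)
    (hl : ∀ (a : A) (b'' : Bidual M.W), ∃ b : M.W,
      arens3 M.l (inclBidual A a) b'' = inclBidual M.W b)
    (hr : ∀ (a : A) (b'' : Bidual M.W), ∃ b : M.W,
      (arens3 M.r.flip) b'' (inclBidual A a) = inclBidual M.W b)
    (h1 : H1Zero (ContinuousLinearMap.mul ℝ A) M.dual.l M.dual.r) :
    ∀ n : ℕ, H1Zero (ContinuousLinearMap.mul ℝ A)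
      (M.iterDual (2 * n + 1)).l (M.iterDual (2 * n + 1)).r := by
  -- the Arens extensions of the actions, restricted to `A`, are the second-dual actions
  have hM : Absorbing M :=
    ⟨fun a φ => (hl a φ).imp fun _ h => h, fun a φ => (hr a φ).imp fun _ h => h⟩
  intro n
  induction n with
  | zero => exact h1
  | succ n ih => exact h1Zero_step (M.iterDual (2 * n)) hBLAI (hM.iterDual (2 * n)) ih

end
end

section
/- Let A be a Banach algebra and B a Banach A-bimodule such that every continuous derivation from A into B* is a weakly compact operator. If Z^ℓ_{A**}(B**) = B** and every continuous derivation from A** (with the first Arens product) into B*** (the dual A**-bimodule of B**) is inner (H^1(A**,B***) = 0), then every continuous derivation from A into B* is inner (H^1(A,B*) = 0). -/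
/-!
Let `D : A → B*` be a continuous derivation and `D'' : A** → B***` its second adjoint. The point is
that `D''` is a derivation for the first Arens product and the dual action on `B***`. Expanding
`D''(a''b'')(w'')` as the iterated functional `a''(a ↦ b''(b ↦ w''(D(ab))))` and using the Leibniz
rule for `D` gives two terms. The one coming from `D(a)·b` is `D''(a'')·b''` evaluated at `w''`, by
definition of the triple adjoints. For the one coming from `a·D(b)`, weak compactness of `D` yields
`D''(b'') = f̂` for some `f ∈ B*` (`exists_bidualMap_eq`, a Goldstine-type argument), which turns
it into `a''(a ↦ w''(a·f))`; the hypothesis `Z^ℓ(B**) = B**` allows `a''` and `w''` to be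
interchanged (`arens3_swap`), since a weak* continuous functional on `A**` is evaluation at an
element of `A*`.

Hence `D''` is inner, implemented by some `φ ∈ B***`, and the restriction of `φ` to `B` implements
`D`, because the Arens actions extend the original ones.
-/

noncomputable section

open ContinuousLinearMap Filter Topology Metric

variable {A : Type} [NormedAddCommGroup A] [NormedSpace ℝ A] {mul : A →L[ℝ] A →L[ℝ] A}

section Lemmas

variable {E F G : Type}
variable [NormedAddCommGroup E] [NormedSpace ℝ E] [NormedAddCommGroup F] [NormedSpace ℝ F]
  [NormedAddCommGroup G] [NormedSpace ℝ G]

/-- The weak* continuous functionals on `E*` are the evaluations at points of `E`. -/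
theorem weakDual_functional_eq_eval (φ : WeakDual ℝ E →L[ℝ] ℝ) :
    ∃ x : E, ∀ f : WeakDual ℝ E, φ f = f x := by
  obtain ⟨x, hx⟩ := LinearMap.dualEmbedding_surjective (topDualPairing ℝ E) φ
  exact ⟨x, fun f => (DFunLike.congr_fun hx f).symm⟩

/-- Hahn–Banach separation of a point from a weak* closed convex set by an evaluation. -/
theorem weakDual_separation {s : Set (WeakDual ℝ E)} (hs : Convex ℝ s) (hc : IsClosed s)
    {z : WeakDual ℝ E} (hz : z ∉ s) : ∃ (x : E) (u : ℝ), (∀ f ∈ s, f x < u) ∧ u < z x := by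
  have : LocallyConvexSpace ℝ (WeakDual ℝ E) :=
    WeakBilin.locallyConvexSpace (B := topDualPairing ℝ E)
  obtain ⟨φ, u, hu, hu'⟩ := geometric_hahn_banach_closed_point (E := WeakDual ℝ E) hs hc hz
  obtain ⟨x, hx⟩ := weakDual_functional_eq_eval φ
  exact ⟨x, u, fun f hf => (hx f).symm.trans_lt (hu f hf), hu'.trans_eq (hx z)⟩

/-- If `‖x''‖ ≤ 1`, then `T''(x'')` lies in the weak* closure of the canonical copy of the image
of the unit ball under `T`; for `T = id` this is Goldstine's theorem. -/
theorem bidualMap_mem_closure (T : E →L[ℝ] F) (x'' : Bidual E) (hx : ‖x''‖ ≤ 1) :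
    StrongDual.toWeakDual (bidualMap T x'') ∈
      closure ((fun x => StrongDual.toWeakDual (inclBidual F (T x))) '' closedBall (0 : E) 1) := by
  let K : E →ₗ[ℝ] WeakDual ℝ (Dl F) :=
    StrongDual.toWeakDual.toLinearMap ∘ₗ ((inclBidual F).comp T).toLinearMap
  have hconv : Convex ℝ (K '' closedBall (0 : E) 1) :=
    (convex_closedBall (0 : E) 1).linear_image K
  have hconv' : Convex ℝ (closure (K '' closedBall (0 : E) 1)) :=
    Convex.closure (𝕜 := ℝ) (E := WeakDual ℝ (Dl F)) hconv
  by_contra hz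
  obtain ⟨g, u, hu, hu'⟩ := weakDual_separation hconv' isClosed_closure hz
  have hball : ∀ x : E, ‖x‖ ≤ 1 → g (T x) < u := fun x hx =>
    hu (K x) (subset_closure (Set.mem_image_of_mem K (mem_closedBall_zero_iff.mpr hx)))
  have hu0 : 0 < u := by
    have h := hball 0 (norm_zero.trans_le zero_le_one)
    rwa [map_zero, map_zero] at h
  have hnorm : ‖g.comp T‖ ≤ u := by
    refine ContinuousLinearMap.opNorm_le_of_unit_norm hu0.le fun x hx => ?_
    have h1 : g (T x) < u := hball x hx.le
    have h2 : g (T (-x)) < u := hball (-x) ((norm_neg x).trans_le hx.le)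
    rw [map_neg, map_neg] at h2
    exact abs_le.mpr ⟨(neg_lt.mp h2).le, h1.le⟩
  have h3 : u < x'' (g.comp T) := hu'
  have h4 : x'' (g.comp T) ≤ 1 * u :=
    (le_abs_self _).trans (x''.le_of_opNorm_le_of_le hx hnorm)
  linarith

/-- The second adjoint of a weakly compact operator takes values in the canonical copy of the
target space. -/
theorem exists_bidualMap_eq (T : E →L[ℝ] F) (hT : WeaklyCompactOp T) (x'' : Bidual E) :
    ∃ y : F, bidualMap T x'' = inclBidual F y := by
  have hball : ∀ x'' : Bidual E, ‖x''‖ ≤ 1 → ∃ y : F, bidualMap T x'' = inclBidual F y := by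
    intro x'' hx
    let J : WeakSpace ℝ F →L[ℝ] WeakDual ℝ (Dl F) := NormedSpace.inclusionInDoubleDualWeak ℝ F
    let S : Set (WeakSpace ℝ F) := T '' closedBall 0 1
    have hc : IsCompact (closure S) := hT
    have hcl : IsClosed (J '' closure S) := (hc.image J.continuous).isClosed
    have hsub : (fun x => StrongDual.toWeakDual (inclBidual F (T x))) '' closedBall (0 : E) 1 ⊆
        J '' closure S := by
      rintro _ ⟨x, hx, rfl⟩
      exact ⟨T x, subset_closure ⟨x, hx, rfl⟩, rfl⟩
    obtain ⟨y, -, hy⟩ := closure_minimal hsub hcl (bidualMap_mem_closure T x'' hx)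
    exact ⟨y, hy.symm⟩
  have hpos : 0 < ‖x''‖ + 1 := by positivity
  obtain ⟨y, hy⟩ := hball ((‖x''‖ + 1)⁻¹ • x'') (by
    rw [norm_smul, norm_inv, Real.norm_of_nonneg hpos.le, inv_mul_le_one₀ hpos]
    linarith)
  refine ⟨(‖x''‖ + 1) • y, ?_⟩
  rw [map_smul] at hy
  rw [map_smul, ← hy, smul_smul, mul_inv_cancel₀ hpos.ne', one_smul]

/-- If `y'' ↦ m***(x'', y'')` is weak* continuous, the iterated functional defining
`⟨m***(x'', y''), g⟩` may be evaluated in the opposite order. -/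
theorem arens3_swap (m : E →L[ℝ] F →L[ℝ] G) (x'' : Bidual E)
    (h : WStarCont (E := Dl F) (F := Dl G) (fun y'' => arens3 m x'' y''))
    (y'' : Bidual F) (g : Dl G) :
    arens3 m x'' y'' g = y'' (x''.comp (adj m.flip g)) := by
  let φ : WeakDual ℝ (Dl F) →L[ℝ] ℝ :=
    { toFun := fun y'' => arens3 m x'' (WeakDual.toStrongDual y'') g
      map_add' := fun a b => by rw [map_add, map_add]; rfl
      map_smul' := fun c a => by rw [map_smul, map_smul]; rfl
      cont := (WeakDual.eval_continuous g).comp h }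
  obtain ⟨k, hk⟩ := weakDual_functional_eq_eval φ
  have hk' : k = x''.comp (adj m.flip g) := by
    ext y
    exact (hk (StrongDual.toWeakDual (inclBidual F y))).symm
  rw [← hk']
  exact hk (StrongDual.toWeakDual y'')

end Lemmas

/-- **Theorem 2-12.** If every continuous derivation `A → B*` is weakly compact,
`Z^ℓ_{A**}(B**) = B**` and `H¹(A**, B***) = 0`, then `H¹(A, B*) = 0`. -/
theorem stmt6 {A : Type} [NonUnitalNormedRing A] [NormedSpace ℝ A]
    [IsScalarTower ℝ A A] [SMulCommClass ℝ A A] [CompleteSpace A]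
    (M : BBimod A (ContinuousLinearMap.mul ℝ A))
    (hwc : ∀ D : A →L[ℝ] Dl M.W,
      IsDerivation (ContinuousLinearMap.mul ℝ A) M.dual.l M.dual.r D → WeaklyCompactOp D)
    (hZ : ∀ b'' : Bidual M.W,
      WStarCont (E := Dl A) (F := Dl M.W) (fun a'' => (arens3 M.r.flip) b'' a''))
    (h1 : H1Zero (arens3 (ContinuousLinearMap.mul ℝ A))
      (dualActL ((arens3 M.r.flip).flip)) (dualActL (arens3 M.l))) :
    H1Zero (ContinuousLinearMap.mul ℝ A) M.dual.l M.dual.r := by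
  intro (D : A →L[ℝ] Dl M.W) hD
  replace hD : ∀ a b : A, D (ContinuousLinearMap.mul ℝ A a b) =
      dualActL M.r a (D b) + dualActL M.l b (D a) := hD
  have hder : IsDerivation (arens3 (ContinuousLinearMap.mul ℝ A))
      (dualActL ((arens3 M.r.flip).flip)) (dualActL (arens3 M.l)) (bidualMap D) := by
    intro a'' b''
    ext w''
    obtain ⟨f, hf⟩ := exists_bidualMap_eq D (hwc D hD) b''
    have key : adj (adj (ContinuousLinearMap.mul ℝ A)) b'' (w''.comp D) =
        w''.comp (adj M.r.flip.flip f) + (arens3 M.l b'' w'').comp D := by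
      ext a
      have e1 : adj (ContinuousLinearMap.mul ℝ A) (w''.comp D) a =
          (w''.comp (dualActL M.r a)).comp D + adj (adj M.l) w'' (D a) := by
        ext b
        have := congrArg w'' (hD a b)
        rw [map_add] at this
        exact this
      have e2 : b'' ((w''.comp (dualActL M.r a)).comp D) = w'' (dualActL M.r a f) :=
        DFunLike.congr_fun hf (w''.comp (dualActL M.r a))
      change b'' (adj (ContinuousLinearMap.mul ℝ A) (w''.comp D) a) = _
      rw [e1, map_add, e2]
      rfl
    have hsw := arens3_swap M.r.flip w'' (hZ w'') a'' f
    have hf' : bidualMap D b'' (arens3 M.r.flip w'' a'') = arens3 M.r.flip w'' a'' f :=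
      DFunLike.congr_fun hf (arens3 M.r.flip w'' a'')
    change a'' (adj (adj (ContinuousLinearMap.mul ℝ A)) b'' (w''.comp D)) =
      bidualMap D b'' (arens3 M.r.flip w'' a'') + a'' ((arens3 M.l b'' w'').comp D)
    rw [key, map_add, hf', hsw]
  obtain ⟨φ, hφ⟩ := h1 _ hder
  refine ⟨φ.comp (inclBidual M.W), fun a => ContinuousLinearMap.ext fun w => ?_⟩
  exact DFunLike.congr_fun (hφ (inclBidual A a)) (inclBidual M.W w)

end
end

section
/- Let A be a Banach algebra and B a Banach A-bimodule such that for every continuous derivation D : A → B*, the second adjoint D″ : A** → B*** satisfies D″(A**) ⊆ B* (B* canonically embedded in B***). If Z^ℓ_{A**}(B**) = B** and every continuous derivation from A** (with the first Arens product) into B*** (the dual A**-bimodule of B**) is inner (H^1(A**,B***) = 0), then every continuous derivation from A into B* is inner (H^1(A,B*) = 0). -/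
/-!
Let `D : A → B*` be a continuous derivation.  Its second adjoint `D″` is a derivation
`A** → B***`: in
`⟨D″(a″b″), x″⟩ = lim_α lim_β (⟨x″, a_α · D b_β⟩ + ⟨x″, D a_α · b_β⟩)`
the second summand always converges to `⟨D″a″ · b″, x″⟩`.  For the first one, write `D″b″ = f`
with `f ∈ B*`; the inner limit is `⟨x″, a_α · f⟩ = ⟨x″ · a_α, f⟩`, and this converges to
`⟨x″ · a″, f⟩` exactly because `a″ ↦ x″ · a″` is weak*-continuous (`arens3_flip_eval`).
By hypothesis `D″` is then inner, implemented by some `w ∈ B***`, and the restriction of `w`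
to `B` implements `D`.

Limits of nets are avoided: a weak*-continuous functional on `A**` is evaluation at a point of
`A*` (`wstarCont_eval`), which its values on `A` determine, and the remaining identities hold
by unfolding adjoints.
-/

noncomputable section

open ContinuousLinearMap Filter Topology Metric

variable {A : Type} [NormedAddCommGroup A] [NormedSpace ℝ A] {mul : A →L[ℝ] A →L[ℝ] A}

/-- A weak*-continuous linear functional on a dual space is evaluation at a point. -/
theorem weakDual_exists_eval {X : Type} [NormedAddCommGroup X] [NormedSpace ℝ X]
    (φ : WeakDual ℝ X →L[ℝ] ℝ) : ∃ g : X, ∀ x : WeakDual ℝ X, φ x = x g := by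
  obtain ⟨g, hg⟩ := LinearMap.dualEmbedding_surjective (topDualPairing ℝ X) φ
  exact ⟨g, fun x => (DFunLike.congr_fun hg x).symm⟩

/-- If `T : E** → F**` is linear and weak*-to-weak* continuous and `f ∈ F*`, then the functional
`x″ ↦ ⟨T x″, f⟩` is evaluation at an element of `E*`. -/
theorem wstarCont_eval {E F : Type} [NormedAddCommGroup E] [NormedSpace ℝ E]
    [NormedAddCommGroup F] [NormedSpace ℝ F] (T : Bidual E →L[ℝ] Bidual F)
    (hT : WStarCont (E := Dl E) (F := Dl F) (fun x => T x)) (f : Dl F) :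
    ∃ g : Dl E, ∀ x : Bidual E, T x f = x g := by
  have hcont : Continuous (fun x : WeakDual ℝ (Dl E) =>
      inclBidual (Dl F) f (T (WeakDual.toStrongDual x))) :=
    (WeakDual.eval_continuous (𝕜 := ℝ) (E := Dl F) f).comp hT
  obtain ⟨g, hg⟩ := weakDual_exists_eval
    (⟨((inclBidual (Dl F) f).comp T).toLinearMap ∘ₗ
      (WeakDual.toStrongDual (𝕜 := ℝ) (E := Dl E)).toLinearMap, hcont⟩ :
        WeakDual ℝ (Dl E) →L[ℝ] ℝ)
  exact ⟨g, fun x => hg (StrongDual.toWeakDual x)⟩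

/-- Under weak*-continuity of `a″ ↦ x″ · a″`, the two ways of pairing `x″ · a″` with `f ∈ B*`
agree: `⟨x″ · a″, f⟩ = ⟨a″, (a ↦ ⟨x″, a · f⟩)⟩`, where `⟨a · f, w⟩ = ⟨f, w · a⟩`. -/
theorem arens3_flip_eval {A W : Type} [NormedAddCommGroup A] [NormedSpace ℝ A]
    [NormedAddCommGroup W] [NormedSpace ℝ W] (r : A →L[ℝ] W →L[ℝ] W) (x : Bidual W)
    (hx : WStarCont (E := Dl A) (F := Dl W) (fun a => arens3 r.flip x a))
    (a : Bidual A) (f : Dl W) :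
    arens3 r.flip x a f = a (x.comp ((dualActL r).flip f)) := by
  obtain ⟨g, hg⟩ := wstarCont_eval (arens3 r.flip x) hx f
  rw [hg]
  congr 1
  ext c
  -- `g` is computed by testing against the canonical image of `c ∈ A` in `A**`.
  exact (hg (inclBidual A c)).symm

/-- The second adjoint `D″` of a derivation `D : A → B*` is a derivation `A** → B***`, provided
`D″(A**) ⊆ B*` and all maps `a″ ↦ x″ · a″` are weak*-continuous. -/
theorem isDerivation_bidualMap {A W : Type} [NormedAddCommGroup A] [NormedSpace ℝ A]
    [NormedAddCommGroup W] [NormedSpace ℝ W] (mul : A →L[ℝ] A →L[ℝ] A)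
    (l r : A →L[ℝ] W →L[ℝ] W) (D : A →L[ℝ] Dl W)
    (hD : IsDerivation mul (dualActL r) (dualActL l) D)
    (hrange : ∀ a : Bidual A, ∃ f : Dl W, bidualMap D a = inclBidual (Dl W) f)
    (hZ : ∀ x : Bidual W, WStarCont (E := Dl A) (F := Dl W) (fun a => arens3 r.flip x a)) :
    IsDerivation (arens3 mul) (dualActL ((arens3 r.flip).flip)) (dualActL (arens3 l))
      (bidualMap D) := by
  intro a b
  ext x
  obtain ⟨f, hf⟩ := hrange b
  have hb (y : Bidual W) : b (y.comp D) = y f := DFunLike.congr_fun hf y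
  change a (adj (adj mul) b (x.comp D)) =
    bidualMap D b (arens3 r.flip x a) + a ((arens3 l b x).comp D)
  rw [hf]
  change _ = arens3 r.flip x a f + _
  rw [arens3_flip_eval r x (hZ x), ← map_add]
  congr 1
  ext c
  change b ((x.comp D).comp (mul c)) =
    x (dualActL r c f) + b (adj (adj l) x (D c))
  have hsplit : (x.comp D).comp (mul c) =
      (x.comp (dualActL r c)).comp D + adj (adj l) x (D c) := by
    ext d
    change x (D (mul c d)) = x (dualActL r c (D d)) + x (dualActL l d (D c))
    rw [hD c d, map_add]
  rw [hsplit, map_add, hb]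
  rfl

/-- **Theorem 2-13.** If `D″(A**) ⊆ B*` for every continuous derivation `D : A → B*`,
`Z^ℓ_{A**}(B**) = B**` and `H¹(A**, B***) = 0`, then `H¹(A, B*) = 0`. -/
theorem stmt7 {A : Type} [NonUnitalNormedRing A] [NormedSpace ℝ A]
    [IsScalarTower ℝ A A] [SMulCommClass ℝ A A] [CompleteSpace A]
    (M : BBimod A (ContinuousLinearMap.mul ℝ A))
    (hD : ∀ D : A →L[ℝ] Dl M.W,
      IsDerivation (ContinuousLinearMap.mul ℝ A) M.dual.l M.dual.r D →
      ∀ a'' : Bidual A, ∃ f : Dl M.W, bidualMap D a'' = inclBidual (Dl M.W) f)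
    (hZ : ∀ b'' : Bidual M.W,
      WStarCont (E := Dl A) (F := Dl M.W) (fun a'' => (arens3 M.r.flip) b'' a''))
    (h1 : H1Zero (arens3 (ContinuousLinearMap.mul ℝ A))
      (dualActL ((arens3 M.r.flip).flip)) (dualActL (arens3 M.l))) :
    H1Zero (ContinuousLinearMap.mul ℝ A) M.dual.l M.dual.r := by
  intro D hDer
  obtain ⟨w, hw⟩ := h1 (bidualMap D)
    (isDerivation_bidualMap _ M.l M.r D hDer (hD D hDer) hZ)
  refine ⟨w.comp (inclBidual M.W), fun a => ?_⟩
  refine ContinuousLinearMap.ext fun y : M.W => ?_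
  -- On canonical images, `D″` and both triple-adjoint actions restrict to the original maps.
  exact DFunLike.congr_fun (hw (inclBidual A a)) (inclBidual M.W y)

end
end

section
/- Let A be a Banach algebra and B a Banach A-bimodule. Suppose A·A** ⊆ A (the first Arens product a·a″ lies in A for all a ∈ A, a″ ∈ A**) and B**·A = B** (every b″ ∈ B** has the form π_r***(y″,a) for some y″ ∈ B**, a ∈ A). If every continuous derivation from A** (with the first Arens product) into B*** (the dual A**-bimodule of B**) is inner (H^1(A**,B***) = 0), then every continuous derivation from A into B* is inner (H^1(A,B*) = 0). -/
/-!
For a derivation `D : A → B*`, the second adjoint `D'' : A** → B***` is again a derivation. The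
only delicate term is `a''·D''(b'')`: it requires `a'' ↦ ⟨φ, x''·a''⟩` to be weak*-continuous for
`φ ∈ B***`, which fails in general as `π_r***` is weak*-continuous only in its first variable.
Writing `x'' = y''·a` gives `x''·a'' = y''·(a a'')` with `a a'' ∈ A`, so only the functional
`c ↦ ⟨φ, y''·c⟩` in `A*` is evaluated, and weak*-continuity follows
(`apply_act_eq_of_factor`). By hypothesis `D''` is then implemented by some `f ∈ B***`, and the
restriction of `f` to `B` implements `D`.
-/

noncomputable section

open ContinuousLinearMap Filter Topology Metric

variable {A : Type} [NormedAddCommGroup A] [NormedSpace ℝ A] {mul : A →L[ℝ] A →L[ℝ] A}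

/-- Associativity of the right action of `A**` on `B**`, in the case
`y''·(a a'') = (y''·a)·a''` with `a ∈ A`. -/
theorem arens3_right_assoc {A : Type} [NonUnitalNormedRing A] [NormedSpace ℝ A]
    [IsScalarTower ℝ A A] [SMulCommClass ℝ A A]
    (M : BBimod A (ContinuousLinearMap.mul ℝ A)) (y : Bidual M.W) (a : A) (a'' : Bidual A) :
    arens3 M.r.flip (arens3 M.r.flip y (inclBidual A a)) a'' =
      arens3 M.r.flip y (arens3 (ContinuousLinearMap.mul ℝ A) (inclBidual A a) a'') := by
  ext f
  change y _ = y _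
  congr 1
  ext w
  change a'' _ = a'' _
  congr 1
  ext c
  exact congrArg f (M.isBBimod.2.1 a c w).symm

/-- If `x'' = y''·a` and `a a'' ∈ A`, then `⟨φ, x''·a''⟩ = ⟨a'', c ↦ ⟨φ, x''·c⟩⟩` for every
`φ ∈ B***`; this is the weak*-continuity of `a'' ↦ ⟨φ, x''·a''⟩`. -/
theorem apply_act_eq_of_factor {A : Type} [NonUnitalNormedRing A] [NormedSpace ℝ A]
    [IsScalarTower ℝ A A] [SMulCommClass ℝ A A]
    (M : BBimod A (ContinuousLinearMap.mul ℝ A)) (x y : Bidual M.W) (a b : A) (a'' : Bidual A)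
    (hx : x = arens3 M.r.flip y (inclBidual A a))
    (hb : arens3 (ContinuousLinearMap.mul ℝ A) (inclBidual A a) a'' = inclBidual A b)
    (φ : Dl (Bidual M.W)) :
    φ (arens3 M.r.flip x a'') = a'' (φ.comp ((arens3 M.r.flip x).comp (inclBidual A))) := by
  -- `ψ c = ⟨φ, y''·c⟩`
  let ψ : Dl A := φ.comp ((arens3 M.r.flip y).comp (inclBidual A))
  have h1 : φ (arens3 M.r.flip x a'') = inclBidual A b ψ := by
    rw [hx, arens3_right_assoc, hb]; rfl
  rw [h1, ← hb]
  change a'' _ = a'' _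
  congr 1
  ext c
  change φ (arens3 M.r.flip y (inclBidual A (a * c))) =
    φ (arens3 M.r.flip x (inclBidual A c))
  rw [hx, arens3_right_assoc]
  rfl

/-- The second adjoint of a derivation `A → B*` is a derivation `A** → B***`. -/
theorem isDerivation_bidualMap_s8 {A : Type} [NonUnitalNormedRing A] [NormedSpace ℝ A]
    [IsScalarTower ℝ A A] [SMulCommClass ℝ A A]
    (M : BBimod A (ContinuousLinearMap.mul ℝ A))
    (hAA : ∀ (a : A) (a'' : Bidual A), ∃ b : A,
      arens3 (ContinuousLinearMap.mul ℝ A) (inclBidual A a) a'' = inclBidual A b)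
    (hBA : ∀ b'' : Bidual M.W, ∃ (y'' : Bidual M.W) (a : A),
      b'' = (arens3 M.r.flip) y'' (inclBidual A a))
    (D : A →L[ℝ] Dl M.W)
    (hD : IsDerivation (ContinuousLinearMap.mul ℝ A) (dualActL M.r) (dualActL M.l) D) :
    IsDerivation (W := Dl (Bidual M.W)) (arens3 (ContinuousLinearMap.mul ℝ A))
      (dualActL ((arens3 M.r.flip).flip)) (dualActL (arens3 M.l)) (bidualMap D) := by
  intro a'' b''
  ext x
  obtain ⟨y, a, hx⟩ := hBA x
  obtain ⟨b, hb⟩ := hAA a a''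
  change bidualMap D (arens3 (ContinuousLinearMap.mul ℝ A) a'' b'') x =
    bidualMap D b'' (arens3 M.r.flip x a'') + bidualMap D a'' (arens3 M.l b'' x)
  rw [apply_act_eq_of_factor M x y a b a'' hx hb (bidualMap D b'')]
  change a'' _ = a'' _ + a'' _
  rw [← map_add]
  congr 1
  ext c
  change b'' _ = b'' _ + b'' _
  rw [← map_add]
  congr 1
  ext d
  change x (D (c * d)) = x (dualActL M.r c (D d)) + x (dualActL M.l d (D c))
  rw [← map_add]
  exact congrArg x (hD c d)

/-- **Theorem 2-16.** If `A·A** ⊆ A`, `B**·A = B**` and `H¹(A**, B***) = 0`,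
then `H¹(A, B*) = 0`. -/
theorem stmt8 {A : Type} [NonUnitalNormedRing A] [NormedSpace ℝ A]
    [IsScalarTower ℝ A A] [SMulCommClass ℝ A A] [CompleteSpace A]
    (M : BBimod A (ContinuousLinearMap.mul ℝ A))
    (hAA : ∀ (a : A) (a'' : Bidual A), ∃ b : A,
      arens3 (ContinuousLinearMap.mul ℝ A) (inclBidual A a) a'' = inclBidual A b)
    (hBA : ∀ b'' : Bidual M.W, ∃ (y'' : Bidual M.W) (a : A),
      b'' = (arens3 M.r.flip) y'' (inclBidual A a))
    (h1 : H1Zero (arens3 (ContinuousLinearMap.mul ℝ A))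
      (dualActL ((arens3 M.r.flip).flip)) (dualActL (arens3 M.l))) :
    H1Zero (ContinuousLinearMap.mul ℝ A) M.dual.l M.dual.r := by
  intro D hD
  obtain ⟨f, hf⟩ := h1 (bidualMap D) (isDerivation_bidualMap_s8 M hAA hBA D hD)
  refine ⟨f.comp (inclBidual M.W), fun a => ?_⟩
  refine ContinuousLinearMap.ext fun w => ?_
  exact congrArg (fun g : Dl (Bidual M.W) => g (inclBidual M.W w)) (hf (inclBidual A a))

end
end

section
/- Let A be a Banach algebra and B a Banach A-bimodule with Z^ℓ_{B**}(A**) = A**, so that B* (embedded in B***) is an A**-submodule of the dual A**-bimodule B***. Suppose every continuous derivation from A** (with the first Arens product) into B* is weak*-to-weak* continuous (weak* topologies of A** and of B* as the dual of B). If every continuous derivation from A into B* is inner (H^1(A,B*) = 0), then every continuous derivation from A** into B* is inner (H^1(A**,B*) = 0). -/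
/-!
Restricting a derivation `D : A** → B*` to `A` gives a derivation into `B*`, so by hypothesis
there is `f ∈ B*` with `⟨D a, b⟩ = ⟨f, b·a - a·b⟩` for `a ∈ A`, `b ∈ B`. The same `f` implements `D`
on all of `A**`.

The key fact is that a weak*-continuous functional on a dual space `E*` is evaluation at a point of
`E`, hence is determined by its values on `F` when `E = F*` (`exists_eval_of_wstarCont`,
`wstarCont_apply_eq`). Applied to `x ↦ ⟨D x, b⟩` on `A**`, it gives
`⟨D x, b⟩ = ⟨x, a ↦ ⟨D a, b⟩⟩ = ⟨x, a ↦ f(b·a) - f(a·b)⟩`. Applied to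
`b'' ↦ ⟨x·b'', f⟩` on `B**`, which is weak*-continuous because `Z^ℓ_{B**}(A**) = A**`, it shows that
`f·x` is the element `b ↦ ⟨x, a ↦ f(a·b)⟩` of `B*`. The element `x·f` is
`b ↦ ⟨x, a ↦ f(b·a)⟩` directly from the definition of the triple adjoint. Thus
`D x = x·f - f·x` holds in `B*`, and therefore in `B***`.
-/


noncomputable section

open ContinuousLinearMap Filter Topology Metric

variable {A : Type} [NormedAddCommGroup A] [NormedSpace ℝ A] {mul : A →L[ℝ] A →L[ℝ] A}

/-- A weak*-to-weak* continuous linear map composed with a point evaluation is itself a point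
evaluation, because the dual of `E*` with its weak* topology is `E`. -/
theorem exists_eval_of_wstarCont {E F : Type} [NormedAddCommGroup E] [NormedSpace ℝ E]
    [NormedAddCommGroup F] [NormedSpace ℝ F] (T : Dl E →L[ℝ] Dl F)
    (hT : WStarCont (E := E) (F := F) (fun x => T x)) (v : F) :
    ∃ e : E, ∀ x : Dl E, T x v = x e := by
  let φ : WeakDual ℝ E →L[ℝ] ℝ :=
    { toFun := fun x => T x v
      map_add' := fun x y => by
        have h := map_add T x y
        exact congrArg (fun g : Dl F => g v) h
      map_smul' := fun c x => by
        have h := map_smul T c x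
        exact congrArg (fun g : Dl F => g v) h
      cont := (WeakDual.eval_continuous v).comp hT }
  obtain ⟨e, he⟩ := LinearMap.dualEmbedding_surjective (topDualPairing ℝ E) φ
  exact ⟨e, fun x => (congrArg (fun g : WeakDual ℝ E →L[ℝ] ℝ => g x) he).symm⟩

/-- A weak*-to-weak* continuous map on a bidual is determined by its values on the original
space. -/
theorem wstarCont_apply_eq {E F : Type} [NormedAddCommGroup E] [NormedSpace ℝ E]
    [NormedAddCommGroup F] [NormedSpace ℝ F] (T : Bidual E →L[ℝ] Dl F)
    (hT : WStarCont (E := Dl E) (F := F) (fun x => T x)) (v : F) (ψ : Dl E)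
    (hψ : ∀ a : E, T (inclBidual E a) v = ψ a) (x : Bidual E) :
    T x v = x ψ := by
  obtain ⟨e, he⟩ := exists_eval_of_wstarCont T hT v
  have : e = ψ := by
    ext a
    rw [← hψ a, he]
    rfl
  rw [he, this]

/-- **Theorem 2-17.** If `Z^ℓ_{B**}(A**) = A**`, every continuous derivation
`A** → B*` is weak*-to-weak* continuous, and `H¹(A, B*) = 0`, then `H¹(A**, B*) = 0`
(derivations `A** → B*` being understood via the canonical embedding `B* ⊆ B***`). -/
theorem stmt9 {A : Type} [NonUnitalNormedRing A] [NormedSpace ℝ A]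
    [IsScalarTower ℝ A A] [SMulCommClass ℝ A A] [CompleteSpace A]
    (M : BBimod A (ContinuousLinearMap.mul ℝ A))
    (hZ : ∀ a'' : Bidual A,
      WStarCont (E := Dl M.W) (F := Dl M.W) (fun b'' => arens3 M.l a'' b''))
    (hcont : ∀ D : Bidual A →L[ℝ] Dl M.W,
      (∀ x y : Bidual A,
        inclBidual (Dl M.W) (D (arens3 (ContinuousLinearMap.mul ℝ A) x y)) =
          dualActL ((arens3 M.r.flip).flip) x (inclBidual (Dl M.W) (D y)) +
          dualActL (arens3 M.l) y (inclBidual (Dl M.W) (D x))) →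
      WStarCont (E := Dl A) (F := M.W) (fun a'' => D a''))
    (h1 : H1Zero (ContinuousLinearMap.mul ℝ A) M.dual.l M.dual.r) :
    ∀ D : Bidual A →L[ℝ] Dl M.W,
      (∀ x y : Bidual A,
        inclBidual (Dl M.W) (D (arens3 (ContinuousLinearMap.mul ℝ A) x y)) =
          dualActL ((arens3 M.r.flip).flip) x (inclBidual (Dl M.W) (D y)) +
          dualActL (arens3 M.l) y (inclBidual (Dl M.W) (D x))) →
      ∃ f : Dl M.W, ∀ x : Bidual A,
        inclBidual (Dl M.W) (D x) =
          dualActL ((arens3 M.r.flip).flip) x (inclBidual (Dl M.W) f) -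
          dualActL (arens3 M.l) x (inclBidual (Dl M.W) f) := by
  intro D hD
  have hDA : IsDerivation (ContinuousLinearMap.mul ℝ A) M.dual.l M.dual.r
      (D.comp (inclBidual A)) := by
    intro a b
    -- Pairing the derivation identity with the image of `w ∈ B` in `B**` gives the claim by unfolding.
    refine ContinuousLinearMap.ext fun w => ?_
    exact congrArg (fun g : Dl (Bidual M.W) => g (inclBidual M.W w))
      (hD (inclBidual A a) (inclBidual A b))
  obtain ⟨f, hf⟩ := h1 _ hDA
  change Dl M.W at f
  refine ⟨f, fun x => ContinuousLinearMap.ext fun ξ => ?_⟩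
  -- `g₁ = x·f` and `g₂ = f·x` as elements of `B*`.
  let g₁ : Dl M.W := adj (adj M.r.flip) x f
  let g₂ : Dl M.W := x.comp ((adj M.l.flip) f)
  have hr : arens3 M.r.flip ξ x f = ξ g₁ := rfl
  have hl : arens3 M.l x ξ f = ξ g₂ :=
    wstarCont_apply_eq (arens3 M.l x) (hZ x) f g₂ (fun _ => rfl) ξ
  have hDx : D x = g₁ - g₂ := by
    ext w
    have h := wstarCont_apply_eq D (hcont D hD) w
      (adj M.r.flip f w - adj M.l.flip f w)
      (fun a => congrArg (fun g : Dl M.W => g w) (hf a)) x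
    rw [h, map_sub]
    rfl
  change ξ (D x) = arens3 M.r.flip ξ x f - arens3 M.l x ξ f
  rw [hr, hl, hDx, map_sub]

end
end

section
/- Let A be an Arens regular Banach algebra such that every continuous derivation from A** (with the Arens product) into A* is weak*-to-weak* continuous. If A is weakly amenable, then every continuous derivation from A** into A* is inner (H^1(A**,A*) = 0). -/
/-!
Write `a ↦ â` for the canonical embedding of `A` into `A**`. Restricting a derivation `D : A** → A*` to `A` gives a
derivation `A → A*`, so weak amenability provides `f` with `D â = a·f - f·a` for all `a`.
For fixed `b`, the functional `x ↦ ⟨D x, b⟩` is weak*-continuous, hence it is evaluation at some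
`g ∈ A*` (`exists_eval_of_wstarCont`). Testing on `x = â` identifies `g` as `f·b - b·f`, which says
that `⟨D x, b⟩ = ⟨x·f - f·x, b⟩` for all `x`. Here `x·f` comes from the first Arens product and
`f·x` from the second one. Pairing `D x = x·f - f·x` with `y ∈ A**` gives `⟨yx, f⟩` and, by Arens
regularity, `⟨xy, f⟩`.
-/

noncomputable section

open ContinuousLinearMap Filter Topology Metric

variable {A : Type} [NormedAddCommGroup A] [NormedSpace ℝ A] {mul : A →L[ℝ] A →L[ℝ] A}

/-- A weak*-continuous linear functional on a dual space is evaluation at a point. -/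
theorem exists_eval_of_wstarCont_s10 {E : Type} [NormedAddCommGroup E] [NormedSpace ℝ E]
    (φ : Dl E →ₗ[ℝ] ℝ) (hφ : Continuous (show WeakDual ℝ E → ℝ from φ)) :
    ∃ g : E, ∀ x : Dl E, φ x = x g := by
  obtain ⟨g, hg⟩ := LinearMap.dualEmbedding_surjective (topDualPairing ℝ E)
    (⟨φ, hφ⟩ : WeakDual ℝ E →L[ℝ] ℝ)
  exact ⟨g, fun x => (DFunLike.congr_fun hg x).symm⟩

/-- **Corollary 2-18.** Let `A` be Arens regular and let every continuous derivation
`A** → A*` be weak*-to-weak* continuous.  If `A` is weakly amenable then `H¹(A**, A*) = 0`. -/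
theorem stmt10 {A : Type} [NonUnitalNormedRing A] [NormedSpace ℝ A]
    [IsScalarTower ℝ A A] [SMulCommClass ℝ A A] [CompleteSpace A]
    (hreg : arens3 (ContinuousLinearMap.mul ℝ A) =
      (arens3 (ContinuousLinearMap.mul ℝ A).flip).flip)
    (hcont : ∀ D : Bidual A →L[ℝ] Dl A,
      (∀ x y : Bidual A,
        inclBidual (Dl A) (D (arens3 (ContinuousLinearMap.mul ℝ A) x y)) =
          dualActL ((arens3 (ContinuousLinearMap.mul ℝ A)).flip) x (inclBidual (Dl A) (D y)) +
          dualActL (arens3 (ContinuousLinearMap.mul ℝ A)) y (inclBidual (Dl A) (D x))) →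
      WStarCont (E := Dl A) (F := A) (fun a'' => D a''))
    (hwa : H1Zero (ContinuousLinearMap.mul ℝ A)
      (dualActL (ContinuousLinearMap.mul ℝ A).flip) (dualActL (ContinuousLinearMap.mul ℝ A))) :
    ∀ D : Bidual A →L[ℝ] Dl A,
      (∀ x y : Bidual A,
        inclBidual (Dl A) (D (arens3 (ContinuousLinearMap.mul ℝ A) x y)) =
          dualActL ((arens3 (ContinuousLinearMap.mul ℝ A)).flip) x (inclBidual (Dl A) (D y)) +
          dualActL (arens3 (ContinuousLinearMap.mul ℝ A)) y (inclBidual (Dl A) (D x))) →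
      ∃ f : Dl A, ∀ x : Bidual A,
        inclBidual (Dl A) (D x) =
          dualActL ((arens3 (ContinuousLinearMap.mul ℝ A)).flip) x (inclBidual (Dl A) f) -
          dualActL (arens3 (ContinuousLinearMap.mul ℝ A)) x (inclBidual (Dl A) f) := by
  intro D hD
  have hder : IsDerivation (ContinuousLinearMap.mul ℝ A)
      (dualActL (ContinuousLinearMap.mul ℝ A).flip) (dualActL (ContinuousLinearMap.mul ℝ A))
      (D.comp (inclBidual A)) := by
    intro a b
    ext c
    exact DFunLike.congr_fun (hD (inclBidual A a) (inclBidual A b)) (inclBidual A c)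
  obtain ⟨f, hf⟩ := hwa _ hder
  refine ⟨f, fun x => ?_⟩
  -- `D x = x·f - f·x`, the right action being the one of the second Arens product
  have key : D x = adj (adj (ContinuousLinearMap.mul ℝ A)) x f -
      adj (adj (ContinuousLinearMap.mul ℝ A).flip) x f := by
    ext b
    let φ : Bidual A →ₗ[ℝ] ℝ := ((inclBidual A b).comp D).toLinearMap
    have hφ : Continuous (show WeakDual ℝ (Dl A) → ℝ from φ) :=
      (WeakDual.eval_continuous (𝕜 := ℝ) (E := A) b).comp (hcont D hD)
    obtain ⟨g, hg⟩ := exists_eval_of_wstarCont_s10 φ hφ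
    have hgf : g = adj (ContinuousLinearMap.mul ℝ A) f b -
        adj (ContinuousLinearMap.mul ℝ A).flip f b := by
      ext a
      exact (hg (inclBidual A a)).symm.trans (DFunLike.congr_fun (hf a) b)
    calc D x b = x g := hg x
      _ = _ := by rw [hgf, map_sub]; rfl
  ext y
  have hxy : arens3 (ContinuousLinearMap.mul ℝ A) x y f =
      y (adj (adj (ContinuousLinearMap.mul ℝ A).flip) x f) := by
    rw [hreg]; rfl
  calc y (D x) = y (adj (adj (ContinuousLinearMap.mul ℝ A)) x f) -
        y (adj (adj (ContinuousLinearMap.mul ℝ A).flip) x f) := by rw [key, map_sub]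
    _ = _ := by rw [← hxy]; rfl

end
end

section
/- Let A be a Banach algebra and B a Banach A-bimodule such that A**·B ⊆ B and B·A** ⊆ B (i.e. π_ℓ***(a″,b) ∈ B and π_r***(b,a″) ∈ B for all a″ ∈ A**, b ∈ B, with B canonically embedded in B**), so that B is a Banach A**-bimodule. Suppose every continuous derivation from A** (with the first Arens product) into B is weak*-to-weak continuous. If every continuous derivation from A into B is inner (H^1(A,B) = 0), then every continuous derivation from A** into B is inner (H^1(A**,B) = 0). -/
/-!
Let `D : A** → B` be a continuous derivation. Its restriction to `A` is a derivation, since the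
Arens product and the triple-adjoint actions extend the given ones, so there is `b : B` with
`D a = a·b - b·a` on `A`. For a functional `φ` on `B` the map `x ↦ φ (D x)` is linear and
weak*-continuous on `A**`, hence it is evaluation at some `f : A*` (`WStarWeakCont.exists_eval`).
Restricting to `A` identifies `f` as `a ↦ φ (a·b) - φ (b·a)`. The functionals
`x ↦ ⟨x·b, φ⟩` and `x ↦ ⟨b·x, φ⟩` are evaluations too, at `a ↦ φ (a·b)` and `a ↦ φ (b·a)`
(for the second one it matters that `b` lies in `B`), so `D x = x·b - b·x` on all of `A**`.
-/

noncomputable section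

open ContinuousLinearMap Filter Topology Metric

variable {A : Type} [NormedAddCommGroup A] [NormedSpace ℝ A] {mul : A →L[ℝ] A →L[ℝ] A}

section Representation

variable {E F : Type} [NormedAddCommGroup E] [NormedSpace ℝ E]
  [NormedAddCommGroup F] [NormedSpace ℝ F]

/-- A weak*-to-weak continuous linear map, followed by a functional, is evaluation at a point of
the predual: the dual of `E*` with its weak* topology is `E`. -/
theorem WStarWeakCont.exists_eval (T : Dl E →L[ℝ] F)
    (hT : WStarWeakCont (E := E) (F := F) (fun x => T x)) (φ : Dl F) :
    ∃ e : E, ∀ x : Dl E, φ (T x) = x e := by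
  have hφ : Continuous (fun w : WeakSpace ℝ F => φ w) :=
    WeakBilin.eval_continuous (topDualPairing ℝ F).flip φ
  let g : WeakBilin (topDualPairing ℝ E) →L[ℝ] ℝ :=
    { toLinearMap := (φ.comp T).toLinearMap
      cont := hφ.comp hT }
  obtain ⟨e, he⟩ := LinearMap.dualEmbedding_surjective (topDualPairing ℝ E) g
  exact ⟨e, fun x => (DFunLike.congr_fun he x).symm⟩

theorem inclBidual_injective : Function.Injective (inclBidual F) := by
  intro u v h
  have h' : ∀ φ : Dl F, φ u = φ v := fun φ => DFunLike.congr_fun h φ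
  exact (SeparatingDual.eq_iff_forall_dual_eq (R := ℝ)).2 h'

end Representation

/-- **Theorem 2-19 (1).** If `A**·B ⊆ B`, `B·A** ⊆ B`, every continuous derivation
`A** → B` is weak*-to-weak continuous, and `H¹(A, B) = 0`, then `H¹(A**, B) = 0`. -/
theorem stmt11 {A : Type} [NonUnitalNormedRing A] [NormedSpace ℝ A]
    [IsScalarTower ℝ A A] [SMulCommClass ℝ A A] [CompleteSpace A]
    (M : BBimod A (ContinuousLinearMap.mul ℝ A))
    (hl : ∀ (a'' : Bidual A) (b : M.W), ∃ c : M.W,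
      arens3 M.l a'' (inclBidual M.W b) = inclBidual M.W c)
    (hr : ∀ (a'' : Bidual A) (b : M.W), ∃ c : M.W,
      (arens3 M.r.flip) (inclBidual M.W b) a'' = inclBidual M.W c)
    (hcont : ∀ D : Bidual A →L[ℝ] M.W,
      (∀ x y : Bidual A,
        inclBidual M.W (D (arens3 (ContinuousLinearMap.mul ℝ A) x y)) =
          arens3 M.l x (inclBidual M.W (D y)) +
          (arens3 M.r.flip) (inclBidual M.W (D x)) y) →
      WStarWeakCont (E := Dl A) (F := M.W) (fun a'' => D a''))
    (h1 : H1Zero (ContinuousLinearMap.mul ℝ A) M.l M.r) :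
    ∀ D : Bidual A →L[ℝ] M.W,
      (∀ x y : Bidual A,
        inclBidual M.W (D (arens3 (ContinuousLinearMap.mul ℝ A) x y)) =
          arens3 M.l x (inclBidual M.W (D y)) +
          (arens3 M.r.flip) (inclBidual M.W (D x)) y) →
      ∃ b : M.W, ∀ x : Bidual A,
        inclBidual M.W (D x) =
          arens3 M.l x (inclBidual M.W b) - (arens3 M.r.flip) (inclBidual M.W b) x := by
  intro D hD
  have hder : IsDerivation (ContinuousLinearMap.mul ℝ A) M.l M.r (D.comp (inclBidual A)) := by
    intro a c
    apply inclBidual_injective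
    rw [map_add]
    -- On embedded elements the triple adjoints reduce definitionally to the original maps.
    exact hD (inclBidual A a) (inclBidual A c)
  obtain ⟨b, hb⟩ := h1 _ hder
  refine ⟨b, fun x => ?_⟩
  ext φ
  obtain ⟨f, hf⟩ := WStarWeakCont.exists_eval D (hcont D hD) φ
  have hfa : f = φ.comp (M.l.flip b) - φ.comp (M.r.flip b) := by
    ext a
    have h2 : φ (D (inclBidual A a)) = f a := hf (inclBidual A a)
    have h3 : D (inclBidual A a) = M.l a b - M.r a b := hb a
    rw [← h2, h3, map_sub]
    rfl
  calc φ (D x) = x f := hf x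
    _ = x (φ.comp (M.l.flip b)) - x (φ.comp (M.r.flip b)) := by rw [hfa, map_sub]

end
end

section
/- Let A be a Banach algebra with a bounded left approximate identity such that A is a two-sided ideal in A** (with the first Arens product), and suppose every continuous derivation from A** into A*** is weak*-to-weak* continuous. If A is weakly amenable, then A** is weakly amenable, i.e. every continuous derivation from A** into A*** is inner. -/
/-!
Let `D : A** → A***` be a continuous derivation. Its restriction `a ↦ D(a)|_A` is a derivation
`A → A*`, hence is implemented by some `f ∈ A*`. View `f` as an element of `A***` and let `T` be `D`
minus the inner derivation of `A**` implemented by `f`; it suffices to show `T = 0`.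

For `b, c ∈ A` and `x ∈ A**` the derivation identity gives
`⟨D(bc), x⟩ = ⟨D(c), xb⟩ + ⟨D(b), cx⟩`. As `A` is an ideal, `xb` and `cx` lie in `A`, so the right
side is determined by `f` and equals `⟨xbc - bcx, f⟩`; thus `T(bc) = 0`. The approximate identity
makes products norm dense in `A`, so `T` vanishes on `A`. Finally `T` is itself a continuous
derivation, hence weak*-to-weak* continuous by hypothesis, and `A` is weak*-dense in `A**`
(`eq_zero_of_wstar`), so `T = 0`. Applying the continuity hypothesis to `T` rather than to `D`
avoids any discussion of the Arens regularity of `A`. That `T` is a derivation uses associativity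
of the Arens product (`arens3_assoc`).
-/

noncomputable section

open ContinuousLinearMap Filter Topology Metric

variable {A : Type} [NormedAddCommGroup A] [NormedSpace ℝ A] {mul : A →L[ℝ] A →L[ℝ] A}

section ArensLemmas

variable {B : Type} [NonUnitalNormedRing B] [NormedSpace ℝ B]
    [IsScalarTower ℝ B B] [SMulCommClass ℝ B B]

theorem arens3_assoc (x y z : Bidual B) :
    arens3 (ContinuousLinearMap.mul ℝ B) (arens3 (ContinuousLinearMap.mul ℝ B) x y) z =
      arens3 (ContinuousLinearMap.mul ℝ B) x (arens3 (ContinuousLinearMap.mul ℝ B) y z) := by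
  have h1 : ∀ (f : Dl B) (a b : B),
      adj (ContinuousLinearMap.mul ℝ B) (adj (ContinuousLinearMap.mul ℝ B) f a) b =
        adj (ContinuousLinearMap.mul ℝ B) f (a * b) := by
    intro f a b
    ext c
    change f (a * (b * c)) = f (a * b * c)
    rw [mul_assoc]
  have h2 : ∀ (f : Dl B) (a : B),
      adj (adj (ContinuousLinearMap.mul ℝ B)) z (adj (ContinuousLinearMap.mul ℝ B) f a) =
        adj (ContinuousLinearMap.mul ℝ B)
          (adj (adj (ContinuousLinearMap.mul ℝ B)) z f) a := by
    intro f a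
    ext b
    change z (adj (ContinuousLinearMap.mul ℝ B) (adj (ContinuousLinearMap.mul ℝ B) f a) b) =
      z (adj (ContinuousLinearMap.mul ℝ B) f (a * b))
    rw [h1]
  ext f
  change x (adj (adj (ContinuousLinearMap.mul ℝ B)) y
      (adj (adj (ContinuousLinearMap.mul ℝ B)) z f)) =
    x (adj (adj (ContinuousLinearMap.mul ℝ B))
      (arens3 (ContinuousLinearMap.mul ℝ B) y z) f)
  congr 1
  ext a
  change y (adj (ContinuousLinearMap.mul ℝ B)
      (adj (adj (ContinuousLinearMap.mul ℝ B)) z f) a) =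
    y (adj (adj (ContinuousLinearMap.mul ℝ B)) z (adj (ContinuousLinearMap.mul ℝ B) f a))
  rw [h2]

theorem arens3_incl (a b : B) :
    arens3 (ContinuousLinearMap.mul ℝ B) (inclBidual B a) (inclBidual B b) =
      inclBidual B (a * b) := rfl

end ArensLemmas

theorem exists_eval_of_wstar {V : Type} [NormedAddCommGroup V] [NormedSpace ℝ V]
    (φ : WeakDual ℝ V →L[ℝ] ℝ) : ∃ v : V, ∀ x : WeakDual ℝ V, x v = φ x := by
  obtain ⟨v, hv⟩ := LinearMap.dualEmbedding_surjective (𝕜 := ℝ) (topDualPairing ℝ V) φ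
  exact ⟨v, fun x => DFunLike.congr_fun hv x⟩

/-- `E` is weak*-dense in `E**`, in functional form: a weak*-continuous functional on `E**` is
evaluation at some `f ∈ E*`, and `f = 0` when the functional vanishes on `E`. -/
theorem eq_zero_of_wstar {E : Type} [NormedAddCommGroup E] [NormedSpace ℝ E]
    (φ : Bidual E →L[ℝ] ℝ)
    (hφ : Continuous (show WeakDual ℝ (Dl E) → ℝ from fun x => φ x))
    (h0 : ∀ a : E, φ (inclBidual E a) = 0) (x : Bidual E) : φ x = 0 := by
  let ψ : WeakDual ℝ (Dl E) →L[ℝ] ℝ :=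
    { toFun := fun x => φ x
      map_add' := fun x y => φ.map_add x y
      map_smul' := fun c x => φ.map_smul c x
      cont := hφ }
  obtain ⟨f, hf⟩ := exists_eval_of_wstar ψ
  have hf' : ∀ x : Bidual E, x f = φ x := fun x => hf x
  have hf0 : f = 0 := by
    ext a
    exact (hf' (inclBidual E a)).trans (h0 a)
  rw [← hf' x, hf0, map_zero]

/-- **Corollary 2-21.** Let `A` have a bounded left approximate identity, be a two-sided
ideal in `A**`, and let every continuous derivation `A** → A***` be weak*-to-weak*
continuous.  If `A` is weakly amenable then so is `A**`. -/
theorem stmt14 {A : Type} [NonUnitalNormedRing A] [NormedSpace ℝ A]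
    [IsScalarTower ℝ A A] [SMulCommClass ℝ A A] [CompleteSpace A]
    (hBLAI : HasBLAI A)
    (hideal : ∀ (a : A) (a'' : Bidual A),
      (∃ b : A, arens3 (ContinuousLinearMap.mul ℝ A) a'' (inclBidual A a) = inclBidual A b) ∧
      (∃ b : A, arens3 (ContinuousLinearMap.mul ℝ A) (inclBidual A a) a'' = inclBidual A b))
    (hcont : ∀ D : Bidual A →L[ℝ] Dl (Bidual A),
      IsDerivation (arens3 (ContinuousLinearMap.mul ℝ A))
        (dualActL (arens3 (ContinuousLinearMap.mul ℝ A)).flip)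
        (dualActL (arens3 (ContinuousLinearMap.mul ℝ A))) D →
      WStarCont (E := Dl A) (F := Bidual A) (fun a'' => D a''))
    (hwa : H1Zero (ContinuousLinearMap.mul ℝ A)
      (dualActL (ContinuousLinearMap.mul ℝ A).flip)
      (dualActL (ContinuousLinearMap.mul ℝ A))) :
    H1Zero (arens3 (ContinuousLinearMap.mul ℝ A))
      (dualActL (arens3 (ContinuousLinearMap.mul ℝ A)).flip)
      (dualActL (arens3 (ContinuousLinearMap.mul ℝ A))) := by
  intro D hD
  set M := arens3 (ContinuousLinearMap.mul ℝ A) with hM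
  have hassoc : ∀ x y z : Bidual A, M (M x y) z = M x (M y z) := arens3_assoc
  have hDe : ∀ x y z : Bidual A, D (M x y) z = D y (M z x) + D x (M y z) := fun x y z =>
    DFunLike.congr_fun (hD x y) z
  -- Restricting `D` to `A` on both sides gives a derivation `A → A*`, inner by hypothesis.
  obtain ⟨f, hf⟩ := hwa ((dmap (inclBidual A)).comp (D.comp (inclBidual A))) (by
    intro a b
    ext c
    exact hDe (inclBidual A a) (inclBidual A b) (inclBidual A c))
  have hfe : ∀ a c : A, D (inclBidual A a) (inclBidual A c) = f (c * a) - f (a * c) :=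
    fun a c => DFunLike.congr_fun (hf a) c
  -- The inner derivation of `A**` implemented by `f`, regarded as an element of `A***`.
  let F : Dl (Bidual A) := inclBidual (Dl A) f
  let T : Bidual A →L[ℝ] Dl (Bidual A) :=
    D - ((dualActL M.flip).flip F - (dualActL M).flip F)
  have hT : ∀ x z : Bidual A, T x z = D x z - (M z x f - M x z f) := fun x z => rfl
  have hTder : IsDerivation M (dualActL M.flip) (dualActL M) T := by
    intro x y
    ext z
    change T (M x y) z = T y (M z x) + T x (M y z)
    rw [hT, hT, hT, hDe, hassoc, hassoc, hassoc]
    ring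
  -- `T` vanishes at products `bc` of elements of `A`: there only values of `D` on `A × A` enter,
  -- since `xb` and `cx` lie in `A`.
  have hprod : ∀ (b c : A) (x : Bidual A), T (inclBidual A (b * c)) x = 0 := by
    intro b c x
    obtain ⟨u, hu⟩ := (hideal b x).1
    obtain ⟨v, hv⟩ := (hideal c x).2
    have h1 : M x (inclBidual A (b * c)) = inclBidual A (u * c) := by
      rw [← arens3_incl, ← arens3_incl, ← hu]
      exact (hassoc _ _ _).symm
    have h2 : M (inclBidual A (b * c)) x = inclBidual A (b * v) := by
      rw [← arens3_incl, ← arens3_incl, ← hv]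
      exact hassoc _ _ _
    have h3 : inclBidual A (c * u) = inclBidual A (v * b) := by
      rw [← arens3_incl, ← arens3_incl, ← hu, ← hv]
      exact (hassoc _ _ _).symm
    have h4 : f (c * u) = f (v * b) := DFunLike.congr_fun h3 f
    have h5 : D (inclBidual A (b * c)) x =
        D (inclBidual A c) (inclBidual A u) + D (inclBidual A b) (inclBidual A v) := by
      rw [← hu, ← hv]
      exact hDe (inclBidual A b) (inclBidual A c) x
    rw [hT, h1, h2, h5, hfe, hfe, h4]
    change f (u * c) - f (v * b) + (f (v * b) - f (b * v)) - (f (u * c) - f (b * v)) = 0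
    ring
  -- Products are norm dense in `A` thanks to the approximate identity.
  have hA : ∀ (a : A) (x : Bidual A), T (inclBidual A a) x = 0 := by
    intro a x
    obtain ⟨ι, p, hne, hdir, e, C, -, he⟩ := hBLAI
    have hc : Continuous fun a : A => T (inclBidual A a) x :=
      ((T.comp (inclBidual A)).flip x).continuous
    have hl := (hc.tendsto a).comp (he a)
    have h0 : ((fun a : A => T (inclBidual A a) x) ∘ fun i => e i * a) = fun _ => 0 := by
      funext i
      exact hprod (e i) a x
    rw [h0] at hl
    exact tendsto_nhds_unique hl tendsto_const_nhds
  have hT0 : ∀ a x : Bidual A, T a x = 0 := by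
    intro a x
    have hw : Continuous (show WeakDual ℝ (Dl A) → ℝ from fun y => T.flip x y) :=
      (WeakDual.eval_continuous (𝕜 := ℝ) (E := Bidual A) x).comp (hcont T hTder)
    exact eq_zero_of_wstar (T.flip x) hw (fun a => hA a x) a
  refine ⟨F, fun a => ?_⟩
  ext x
  exact sub_eq_zero.mp (hT0 a x)

end
end

section
/- If A is a super-amenable Banach algebra, then A** equipped with the first Arens product is a Connes-amenable Banach algebra: for every normal dual Banach A**-bimodule B, every weak*-to-weak* continuous derivation from A** into B is inner. -/
/-!
A weak*-continuous linear functional on `E**` is evaluation at some `φ ∈ E*`, so it vanishes as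
soon as it vanishes on the canonical copy of `E` (`wstar_functional_eq_zero`). This is the weak*
density of `E` in `E**`.

The canonical embedding `ι : A → A**` is multiplicative for the first Arens product, so a normal
dual `A**`-bimodule `X*` becomes a Banach `A`-bimodule along `ι`, and `D ∘ ι` is a continuous
derivation on `A`. Super-amenability gives `w ∈ X*` with `D (ι a) = ι a · w - w · ι a` for all
`a : A`. For each `x : X` the functional `c ↦ (D c - (c · w - w · c)) x` is weak*-continuous, since
`D` is and since `X*` is normal. As it vanishes on `ι A`, it is zero, and `D` is implemented by `w`.
-/

noncomputable section

open ContinuousLinearMap Filter Topology Metric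

variable {A : Type} [NormedAddCommGroup A] [NormedSpace ℝ A] {mul : A →L[ℝ] A →L[ℝ] A}

/-- A weak*-continuous linear functional on `E**` is determined by its values on `E`: it is
evaluation at an element of `E*`. -/
theorem wstar_functional_eq_zero {E : Type} [NormedAddCommGroup E] [NormedSpace ℝ E]
    (φ : WeakDual ℝ (Dl E) →L[ℝ] ℝ)
    (h : ∀ a : E, φ (show WeakDual ℝ (Dl E) from inclBidual E a) = 0) : φ = 0 := by
  obtain ⟨f, hf⟩ := LinearMap.dualEmbedding_surjective (𝕜 := ℝ) (E := Bidual E) (F := Dl E)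
    (topDualPairing ℝ (Dl E)) φ
  have hval : ∀ c : Bidual E, φ (show WeakDual ℝ (Dl E) from c) = c f := fun c => by
    rw [← hf]; rfl
  have hf0 : f = 0 := by
    ext a
    exact (hval (inclBidual E a)).symm.trans (h a)
  ext c
  refine (hval c).trans ?_
  rw [hf0]
  exact map_zero (show Bidual E from c)

theorem arens3_inclBidual {E F G : Type} [NormedAddCommGroup E] [NormedSpace ℝ E]
    [NormedAddCommGroup F] [NormedSpace ℝ F] [NormedAddCommGroup G] [NormedSpace ℝ G]
    (m : E →L[ℝ] F →L[ℝ] G) (a : E) (b : F) :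
    arens3 m (inclBidual E a) (inclBidual F b) = inclBidual G (m a b) := rfl

/-- Pointwise evaluation of a weak*-to-weak* continuous map is weak*-continuous. -/
theorem WStarCont.eval {E F : Type} [NormedAddCommGroup E] [NormedSpace ℝ E]
    [NormedAddCommGroup F] [NormedSpace ℝ F] {f : Dl E → Dl F} (hf : WStarCont f) (x : F) :
    Continuous (fun c : WeakDual ℝ E => f c x) :=
  (WeakDual.eval_continuous x).comp hf

/-- **Theorem 2-22 (1).** If `A` is super-amenable then `A**` (with the first Arens
product) is Connes-amenable. -/
theorem stmt15 {A : Type} [NonUnitalNormedRing A] [NormedSpace ℝ A]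
    [IsScalarTower ℝ A A] [SMulCommClass ℝ A A] [CompleteSpace A]
    (hsuper : ∀ (W : Type) [NormedAddCommGroup W] [NormedSpace ℝ W] [CompleteSpace W]
      (l r : A →L[ℝ] W →L[ℝ] W), IsBimodule (ContinuousLinearMap.mul ℝ A) l r →
      H1Zero (ContinuousLinearMap.mul ℝ A) l r) :
    ∀ (X : Type) [NormedAddCommGroup X] [NormedSpace ℝ X] [CompleteSpace X]
      (l r : Bidual A →L[ℝ] Dl X →L[ℝ] Dl X),
      IsBimodule (arens3 (ContinuousLinearMap.mul ℝ A)) l r →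
      (∀ f : Dl X, WStarCont (E := Dl A) (F := X) (fun a'' => l a'' f) ∧
        WStarCont (E := Dl A) (F := X) (fun a'' => r a'' f)) →
      ∀ D : Bidual A →L[ℝ] Dl X,
        IsDerivation (arens3 (ContinuousLinearMap.mul ℝ A)) l r D →
        WStarCont (E := Dl A) (F := X) (fun a'' => D a'') →
        IsInner l r D := by
  intro X _ _ _ l r hmod hnorm D hD hDcont
  obtain ⟨hl, hr, hlr⟩ := hmod
  let ι : A →L[ℝ] Bidual A := inclBidual A
  have hι : ∀ a b : A,
      ι (ContinuousLinearMap.mul ℝ A a b) = arens3 (ContinuousLinearMap.mul ℝ A) (ι a) (ι b) :=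
    fun a b => (arens3_inclBidual _ a b).symm
  have hmodA : IsBimodule (ContinuousLinearMap.mul ℝ A) (l.comp ι) (r.comp ι) := by
    refine ⟨fun a b w => ?_, fun a b w => ?_, fun a b w => hlr (ι a) (ι b) w⟩
    · exact (congrArg (fun c => l c w) (hι a b)).trans (hl (ι a) (ι b) w)
    · exact (congrArg (fun c => r c w) (hι a b)).trans (hr (ι a) (ι b) w)
  have hDA : IsDerivation (ContinuousLinearMap.mul ℝ A) (l.comp ι) (r.comp ι) (D.comp ι) :=
    fun a b => (congrArg D (hι a b)).trans (hD (ι a) (ι b))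
  obtain ⟨w, hw⟩ := hsuper (Dl X) (l.comp ι) (r.comp ι) hmodA (D.comp ι) hDA
  refine ⟨w, fun c => ?_⟩
  ext x
  let T : Bidual A →L[ℝ] Dl X := D - (l.flip w - r.flip w)
  let φ : WeakDual ℝ (Dl A) →L[ℝ] ℝ :=
    { toFun := fun c => T c x
      map_add' := fun c d => congrArg (fun g : Dl X => g x) (T.map_add c d)
      map_smul' := fun t c => congrArg (fun g : Dl X => g x) (T.map_smul t c)
      cont := (hDcont.eval x).sub (((hnorm w).1.eval x).sub ((hnorm w).2.eval x)) }
  have hφ : φ = 0 := wstar_functional_eq_zero φ fun a =>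
    congrArg (fun g : Dl X => g x) (sub_eq_zero.mpr (hw a))
  have hc : D c x - (l c w - r c w) x = 0 := congrArg (fun ψ => ψ c) hφ
  exact sub_eq_zero.mp hc

end
end

section
/- Let A be a Banach algebra, B a Banach A-bimodule, and D : A → B* a continuous derivation. If the second adjoint D″ : A** → B*** is a derivation (A** with the first Arens product, B*** the dual A**-bimodule of B**) and B* ⊆ D″(A**) (B* canonically embedded in B***), then Z^ℓ_{A**}(B**) = B**, i.e. for every b″ ∈ B** the map a″ ↦ π_r***(b″,a″) from A** into B** is weak*-to-weak* continuous. -/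
/-!
It suffices to see that `α ↦ ⟨β·α, f⟩` is weak* continuous for each `f ∈ B*`, that is, given
by evaluating `α` at an element of `A*`. Choose `x ∈ A**` with `D″ x = f`. The derivation
identity for `D″` at `(α, x)`, paired with `β`, reads
`⟨D″(α x), β⟩ = ⟨β·α, f⟩ + ⟨D″ α, x·β⟩`.
With the first Arens product, `⟨D″(α x), β⟩ = ⟨α, x·D′ β⟩`, and
`⟨D″ α, x·β⟩ = ⟨α, D′(x·β)⟩`, so the required functional is `x·D′ β - D′(x·β)`.
-/

noncomputable section

open ContinuousLinearMap Filter Topology Metric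

variable {A : Type} [NormedAddCommGroup A] [NormedSpace ℝ A] {mul : A →L[ℝ] A →L[ℝ] A}

/-- **Theorem 2-30.** Let `D : A → B*` be a continuous derivation such that
`D″ : A** → B***` is a derivation and `B* ⊆ D″(A**)`.  Then `Z^ℓ_{A**}(B**) = B**`. -/
theorem stmt16 {A : Type} [NonUnitalNormedRing A] [NormedSpace ℝ A]
    [IsScalarTower ℝ A A] [SMulCommClass ℝ A A] [CompleteSpace A]
    (M : BBimod A (ContinuousLinearMap.mul ℝ A))
    (D : A →L[ℝ] Dl M.W)
    (hder : IsDerivation (ContinuousLinearMap.mul ℝ A) M.dual.l M.dual.r D)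
    (hD2 : IsDerivation (arens3 (ContinuousLinearMap.mul ℝ A))
      (dualActL ((arens3 M.r.flip).flip)) (dualActL (arens3 M.l)) (bidualMap D))
    (hrange : ∀ f : Dl M.W, ∃ a'' : Bidual A,
      bidualMap D a'' = inclBidual (Dl M.W) f) :
    ∀ b'' : Bidual M.W,
      WStarCont (E := Dl A) (F := Dl M.W) (fun a'' => (arens3 M.r.flip) b'' a'') := by
  intro β
  refine WeakDual.continuous_of_continuous_eval fun f => ?_
  obtain ⟨x, hx⟩ := hrange f
  -- The functional in `A*` by which `α ↦ ⟨β·α, f⟩` is evaluation of `α`.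
  let φ : Dl A := adj (adj (ContinuousLinearMap.mul ℝ A)) x (dmap D β) -
    dmap D (arens3 M.l x β)
  refine (WeakDual.eval_continuous (𝕜 := ℝ) (E := Dl A) φ).congr fun α => ?_
  -- The derivation identity for `D″` at `(α, x)`, paired with `β`.
  have h := DFunLike.congr_fun (hD2 α x) β
  rw [hx] at h
  have hpair : α (adj (adj (ContinuousLinearMap.mul ℝ A)) x (dmap D β)) =
      arens3 M.r.flip β α f + α (dmap D (arens3 M.l x β)) := h
  change α φ = arens3 M.r.flip β α f
  rw [map_sub, hpair, add_sub_cancel_right]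

end
end
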